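/- arXiv:1906.10494 — 3 statements merged into one kernel-verified Lean document; each statement's English description precedes it below -/
import Mathlib

section
/- Exponential run theorem: there exists a polynomial p with natural-number coefficients such that for every 2-VASS V with n control states and norm M and for every (0,0)-run τ of V, there is a (0,0)-run of V of length at most p(nM)ⁿ with the same source and target configurations as τ. -/
/-- Integer vectors in the plane. -/
abbrev Vec2 : Type := ℤ × ℤ

/-- The norm of a vector: the maximum of the absolute values of its coordinates. -/
def vnorm (v : Vec2) : ℕ := max v.1.natAbs v.2.natAbs

/-- A vector is positive if both coordinates are positive. -/
def Pos (v : Vec2) : Prop := 0 < v.1 ∧ 0 < v.2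

/-- A vector is semi-positive if both coordinates are nonnegative and one is positive. -/
def SemiPos (v : Vec2) : Prop := 0 ≤ v.1 ∧ 0 ≤ v.2 ∧ (0 < v.1 ∨ 0 < v.2)

/-- A vector is vertical if it is of the form (0, a) with a > 0. -/
def Vert (v : Vec2) : Prop := v.1 = 0 ∧ 0 < v.2

/-- A vector is horizontal if it is of the form (a, 0) with a > 0. -/
def Horiz (v : Vec2) : Prop := 0 < v.1 ∧ v.2 = 0

/-- Embedding of integer vectors into the rational plane. -/
def toQ (v : Vec2) : ℚ × ℚ := ((v.1 : ℚ), (v.2 : ℚ))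

/-- The half-line (ray) ℚ≥0 · x generated by a rational vector x. -/
def rayQ (x : ℚ × ℚ) : Set (ℚ × ℚ) := {z | ∃ a : ℚ, 0 ≤ a ∧ z = a • x}

/-- The cone of a finite list of integer vectors: all nonnegative rational
linear combinations. -/
def Cone (vs : List Vec2) : Set (ℚ × ℚ) :=
  {x | ∃ a : Fin vs.length → ℚ, (∀ i, 0 ≤ a i) ∧ x = ∑ i, a i • toQ (vs.get i)}

/-- The sequential cone: nonnegative rational combinations all of whose
partial sums are in the nonnegative orthant. -/
def SeqCone (vs : List Vec2) : Set (ℚ × ℚ) :=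
  {x | ∃ a : Fin vs.length → ℚ, (∀ i, 0 ≤ a i) ∧
    (∀ k : ℕ, k ≤ vs.length →
      0 ≤ ∑ i : Fin vs.length, if (i : ℕ) < k then a i • toQ (vs.get i) else 0) ∧
    x = ∑ i, a i • toQ (vs.get i)}

/-- Two integer vectors are colinear if they generate the same half-line. -/
def Colinear (v w : Vec2) : Prop := rayQ (toQ v) = rayQ (toQ w)

/-- The clockwise relation on nonnegative vectors:
`Clk v u` iff u lies strictly clockwise from v. -/
def Clk (v u : Vec2) : Prop := 0 < v.2 * u.1 - v.1 * u.2

/-- Projection of a vector on coordinate `j` (`Fin 2` indexes the two coordinates). -/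
def proj (j : Fin 2) (v : Vec2) : ℤ := if j = 0 then v.1 else v.2

/-! ### 2-dimensional vector addition systems with states (2-VASS) -/

/-- A transition of a 2-VASS with control states `Fin n`:
a source state, an effect vector, and a target state. -/
abbrev Transition (n : ℕ) : Type := Fin n × Vec2 × Fin n

/-- A 2-VASS with control states `Fin n` is a finite set of transitions. -/
abbrev VASS (n : ℕ) : Type := Finset (Transition n)

/-- The norm of a 2-VASS: the largest norm of an effect of a transition. -/
def vassNorm {n : ℕ} (V : VASS n) : ℕ := V.sup (fun t => vnorm t.2.1)

/-- The effect of a sequence of transitions: the sum of the individual effects. -/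
def effect {n : ℕ} (π : List (Transition n)) : Vec2 := (π.map (fun t => t.2.1)).sum

/-- A path of `V`: a sequence of transitions of `V` in which
consecutive control states match. -/
def IsPath {n : ℕ} (V : VASS n) (π : List (Transition n)) : Prop :=
  (∀ t ∈ π, t ∈ V) ∧ π.Chain' (fun s t => s.2.2 = t.1)

/-- The path `π` starts at control state `q` (vacuously true for the empty path). -/
def startsAt {n : ℕ} (π : List (Transition n)) (q : Fin n) : Prop :=
  ∀ t ∈ π.head?, t.1 = q

/-- The control state after the first `i` transitions of `π`, for a path
starting at control state `q`. -/
def stateAt {n : ℕ} (π : List (Transition n)) (q : Fin n) (i : ℕ) : Fin n :=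
  (((π.take i).getLast?).map (fun t => t.2.2)).getD q

/-- The final control state of a path `π` starting at control state `q`. -/
def endState {n : ℕ} (π : List (Transition n)) (q : Fin n) : Fin n := stateAt π q π.length

/-- The counter values after the first `i` transitions of `π`, starting from
counter values `u`. -/
def vecAt {n : ℕ} (π : List (Transition n)) (u : Vec2) (i : ℕ) : Vec2 :=
  u + effect (π.take i)

/-- The path `π` is enabled in the configuration `(q, u)`: it starts at `q`
and all intermediate counter values are nonnegative. -/
def Enabled {n : ℕ} (π : List (Transition n)) (q : Fin n) (u : Vec2) : Prop :=
  startsAt π q ∧ ∀ i ≤ π.length, 0 ≤ vecAt π u i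

/-- For `j ∈ {1,2}`, the path `π` is `{j}`-enabled in the configuration `(q, u)`:
it starts at `q` and the `j`-th coordinate of all intermediate counter values is
nonnegative. -/
def JEnabled {n : ℕ} (π : List (Transition n)) (q : Fin n) (u : Vec2) (j : Fin 2) : Prop :=
  startsAt π q ∧ ∀ i ≤ π.length, 0 ≤ proj j (vecAt π u i)

/-- A run of `V`: a path of `V` enabled in the configuration `(q, u)`.
Its source is `(q, u)`, its target is `(endState π q, vecAt π u π.length)`,
and its configurations are `(stateAt π q i, vecAt π u i)` for `i ≤ π.length`. -/
def IsRun {n : ℕ} (V : VASS n) (π : List (Transition n)) (q : Fin n) (u : Vec2) : Prop :=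
  IsPath V π ∧ Enabled π q u

/-- A (0,0)-run of `V`: a run whose source and target counter values are `(0,0)`. -/
def IsZeroRun {n : ℕ} (V : VASS n) (π : List (Transition n)) (q : Fin n) : Prop :=
  IsRun V π q 0 ∧ effect π = 0

/-- A cycle of `V`: a nonempty path of `V` whose starting and ending control
states coincide. -/
def IsCycle {n : ℕ} (V : VASS n) (γ : List (Transition n)) : Prop :=
  IsPath V γ ∧ γ ≠ [] ∧ γ.head?.map (fun t => t.1) = γ.getLast?.map (fun t => t.2.2)

namespace TwoVASS

/-- Both coordinates of `v` have absolute value at most `B`. -/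
def Bdd (B : ℤ) (v : Vec2) : Prop := |v.1| ≤ B ∧ |v.2| ≤ B

theorem Bdd.mono {B C : ℤ} {v : Vec2} (h : Bdd B v) (hBC : B ≤ C) : Bdd C v :=
  ⟨h.1.trans hBC, h.2.trans hBC⟩

theorem Bdd.add {B C : ℤ} {v w : Vec2} (hv : Bdd B v) (hw : Bdd C w) : Bdd (B + C) (v + w) :=
  ⟨(abs_add_le _ _).trans (add_le_add hv.1 hw.1), (abs_add_le _ _).trans (add_le_add hv.2 hw.2)⟩

theorem Bdd.nonneg {B : ℤ} {v : Vec2} (h : Bdd B v) : 0 ≤ B := (abs_nonneg _).trans h.1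

theorem bdd_zero {B : ℤ} (hB : 0 ≤ B) : Bdd B (0 : Vec2) := by simp [Bdd, hB]

/-- `Walk V P L p u q w`: there is a path of `V` of length `L` from state `p` to state `q` leading
from the vector `u` to the vector `w`, such that all configurations on the way satisfy `P`. -/
inductive Walk {n : ℕ} (V : VASS n) (P : Fin n → Vec2 → Prop) :
    ℕ → Fin n → Vec2 → Fin n → Vec2 → Prop
  | nil {p : Fin n} {u : Vec2} : P p u → Walk V P 0 p u p u
  | cons {L : ℕ} {p q r : Fin n} {u v w : Vec2} : P p u → (p, v, q) ∈ V →
      Walk V P L q (u + v) r w → Walk V P (L + 1) p u r w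

/-- The sequences of states `st` and vectors `c` describe, up to index `L`, a path of `V`
all of whose configurations satisfy `P`. -/
structure IsTrace {n : ℕ} (V : VASS n) (P : Fin n → Vec2 → Prop) (L : ℕ)
    (st : ℕ → Fin n) (c : ℕ → Vec2) : Prop where
  step : ∀ i < L, (st i, c (i + 1) - c i, st (i + 1)) ∈ V
  pos : ∀ i ≤ L, P (st i) (c i)

/-- All transitions of `V` have effects bounded by `M`. -/
def EffBdd {n : ℕ} (V : VASS n) (M : ℤ) : Prop := ∀ t ∈ V, Bdd M t.2.1

/-- The predicate of configurations with nonnegative vectors. -/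
def NN {n : ℕ} (_ : Fin n) (x : Vec2) : Prop := 0 ≤ x.1 ∧ 0 ≤ x.2

/-- The trivial predicate on configurations. -/
def Free {n : ℕ} (_ : Fin n) (_ : Vec2) : Prop := True

section
variable {n : ℕ} {V : VASS n} {P P' : Fin n → Vec2 → Prop} {L L' : ℕ} {p q r : Fin n}
  {u v w : Vec2} {M : ℤ} {st : ℕ → Fin n} {c : ℕ → Vec2}

theorem Walk.source (h : Walk V P L p u q w) : P p u := by cases h <;> assumption

theorem Walk.target (h : Walk V P L p u q w) : P q w := by
  induction h with
  | nil h => exact h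
  | cons _ _ _ ih => exact ih

theorem Walk.trans (h : Walk V P L p u q v) (h' : Walk V P L' q v r w) :
    Walk V P (L + L') p u r w := by
  induction h with
  | nil _ => simpa using h'
  | cons hp ht _ ih =>
    have := Walk.cons hp ht (ih h')
    rwa [Nat.add_right_comm]

theorem Walk.bdd (hM : EffBdd V M) (h : Walk V P L p u q w) : Bdd (L * M) (w - u) := by
  induction h with
  | nil _ => simp [Bdd]
  | @cons L p q r u v w _ ht _ ih =>
    have h2 := (hM _ ht).add ih
    have e : v + (w - (u + v)) = w - u := by abel
    simp only [e] at h2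
    refine h2.mono (le_of_eq ?_)
    push_cast; ring

theorem Walk.shift_of_bdd (hM : EffBdd V M) (hM0 : 0 ≤ M) (d : Vec2) (h : Walk V P L p u q w)
    (hP : ∀ s x, P s x → Bdd (L * M) (x - u) → P' s (x + d)) :
    Walk V P' L p (u + d) q (w + d) := by
  induction h with
  | @nil p u h => exact .nil (hP _ _ h (by simp [Bdd]))
  | @cons L p q r u v w hp ht _ ih =>
    have hv := hM _ ht
    refine .cons (hP _ _ hp (by simp only [sub_self]; exact bdd_zero (by positivity))) ht ?_
    rw [add_right_comm]
    refine ih fun s x hx hb => hP s x hx ?_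
    have h2 := hv.add hb
    have e : v + (x - (u + v)) = x - u := by abel
    simp only [e] at h2
    refine h2.mono (le_of_eq ?_)
    push_cast; ring

theorem Walk.shift (d : Vec2) (h : Walk V P L p u q w) (hP : ∀ s x, P s x → P' s (x + d)) :
    Walk V P' L p (u + d) q (w + d) := by
  induction h with
  | nil h => exact .nil (hP _ _ h)
  | cons hp ht _ ih =>
    refine .cons (hP _ _ hp) ht ?_
    rwa [add_right_comm]

theorem Walk.mono (h : Walk V P L p u q w) (hP : ∀ s x, P s x → P' s x) :
    Walk V P' L p u q w := by
  simpa using h.shift 0 (P' := P') (by simpa using hP)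

theorem Walk.exists_trace (h : Walk V P L p u q w) :
    ∃ st c, IsTrace V P L st c ∧ st 0 = p ∧ c 0 = u ∧ st L = q ∧ c L = w := by
  induction h with
  | @nil p u h => exact ⟨fun _ => p, fun _ => u, ⟨by simp, fun _ _ => h⟩, rfl, rfl, rfl, rfl⟩
  | @cons L p q r u v w hp ht _ ih =>
    obtain ⟨st, c, htr, h1, h2, h3, h4⟩ := ih
    refine ⟨fun i => Nat.casesOn i p st, fun i => Nat.casesOn i u c, ⟨?_, ?_⟩, rfl, rfl, h3, h4⟩
    · rintro (_ | i) hi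
      · simpa [h1, h2] using ht
      · exact htr.step i (by omega)
    · rintro (_ | i) hi
      · exact hp
      · exact htr.pos i (by omega)

theorem IsTrace.walk (h : IsTrace V P L st c) (i k : ℕ) (hik : i + k ≤ L) :
    Walk V P k (st i) (c i) (st (i + k)) (c (i + k)) := by
  induction k generalizing i with
  | zero => exact .nil (h.pos i (by omega))
  | succ k ih =>
    refine .cons (h.pos i (by omega)) (h.step i (by omega)) ?_
    rw [add_sub_cancel]
    have := ih (i + 1) (by omega)
    rwa [show i + 1 + k = i + (k + 1) by omega] at this

theorem IsTrace.walk' (h : IsTrace V P L st c) {i j : ℕ} (hij : i ≤ j) (hj : j ≤ L) :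
    Walk V P (j - i) (st i) (c i) (st j) (c j) := by
  have := h.walk i (j - i) (by omega)
  rwa [show i + (j - i) = j by omega] at this

theorem IsTrace.bdd_step (hM : EffBdd V M) (h : IsTrace V P L st c) {i : ℕ} (hi : i < L) :
    Bdd M (c (i + 1) - c i) := hM _ (h.step i hi)

/-- Loops whose removal shifts the rest of a walk by an element of `H` can be cut out, so that
no state is visited twice with the same key. -/
theorem Walk.shorten {ι : Type*} [Fintype ι] (H : AddSubmonoid Vec2)
    (hP : ∀ s x, ∀ d ∈ H, P s x → P s (x + d)) (key : Vec2 → ι)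
    (hk : ∀ l s x y, l ≤ n * Fintype.card ι → Walk V P l s x s y → key x = key y → x - y ∈ H)
    (h : Walk V P L p u q w) :
    ∃ L' w', L' ≤ n * Fintype.card ι ∧ w' - w ∈ H ∧ Walk V P L' p u q w' := by
  induction L using Nat.strong_induction_on generalizing w with
  | _ L ih =>
  by_cases hL : L ≤ n * Fintype.card ι
  · exact ⟨L, w, hL, by simp, h⟩
  obtain ⟨st, c, htr, rfl, rfl, rfl, rfl⟩ := h.exists_trace
  have hcard : Fintype.card (Fin n × ι) < Fintype.card (Fin (n * Fintype.card ι + 1)) := by simp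
  obtain ⟨i, j, hij, he⟩ := Fintype.exists_ne_map_eq_of_card_lt
    (fun i : Fin (n * Fintype.card ι + 1) => (st i, key (c i))) hcard
  obtain ⟨i, j, hij, hj, hst, hkey⟩ : ∃ i j : ℕ, i < j ∧ j ≤ n * Fintype.card ι ∧
      st i = st j ∧ key (c i) = key (c j) := by
    simp only [Prod.mk.injEq] at he
    rcases lt_or_gt_of_ne (fun h => hij (Fin.ext h) : (i : ℕ) ≠ j) with h | h
    · exact ⟨i, j, h, by omega, he⟩
    · exact ⟨j, i, h, by omega, he.1.symm, he.2.symm⟩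
  have hloop := htr.walk' hij.le (by omega)
  rw [← hst] at hloop
  have hmem := hk _ _ _ _ (by omega) hloop hkey
  have h2 := (htr.walk' (i := j) (j := L) (by omega) le_rfl).shift (c i - c j)
    (fun s x hx => hP s x _ hmem hx)
  rw [← hst, add_sub_cancel] at h2
  have h1 := htr.walk' (Nat.zero_le i) (by omega)
  obtain ⟨L', w', hL', hw', hwalk⟩ := ih _ (by omega) (h1.trans h2)
  refine ⟨L', w', hL', ?_, hwalk⟩
  have e : w' - c L = (w' - (c L + (c i - c j))) + (c i - c j) := by abel
  rw [e]
  exact H.add_mem hw' hmem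

/-- A free walk is enabled at every vector whose coordinates are large enough. -/
theorem Walk.enable (hM : EffBdd V M) (hM0 : 0 ≤ M) (h : Walk V Free L p u q w) {d : Vec2}
    (h1 : L * M ≤ d.1) (h2 : L * M ≤ d.2) : Walk V NN L p d q (d + (w - u)) := by
  have := h.shift_of_bdd (P' := NN) hM hM0 (d - u) (fun s x _ hb => by
    obtain ⟨hb1, hb2⟩ := hb
    rw [abs_le] at hb1 hb2
    simp only [Prod.fst_sub, Prod.snd_sub] at hb1 hb2
    constructor
    · simp only [Prod.fst_add, Prod.fst_sub]; linarith
    · simp only [Prod.snd_add, Prod.snd_sub]; linarith)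
  rw [add_sub_cancel] at this
  rwa [show w + (d - u) = d + (w - u) by abel] at this

/-- A cycle can be iterated as soon as both the first and the last vector are large enough. -/
theorem Walk.iterate (hM : EffBdd V M) (hM0 : 0 ≤ M) (h : Walk V Free L p 0 p w) (m : ℕ) {d : Vec2}
    (h1 : L * M ≤ d.1) (h2 : L * M ≤ d.2)
    (h3 : L * M ≤ d.1 + m * w.1) (h4 : L * M ≤ d.2 + m * w.2) :
    Walk V NN (m * L) p d p (d + m • w) := by
  have hLM : 0 ≤ L * M := by positivity
  induction m generalizing d with
  | zero => simpa using Walk.nil (V := V) (P := NN) (p := p) (u := d) ⟨by linarith, by linarith⟩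
  | succ m ih =>
    have hstep := h.enable hM hM0 h1 h2
    rw [sub_zero] at hstep
    have hm : (0 : ℤ) ≤ m := by positivity
    push_cast at h3 h4
    have h5 := ih (d := d + w) ?_ ?_ ?_ ?_
    · have := hstep.trans h5
      rw [show d + w + m • w = d + (m + 1) • w by rw [succ_nsmul]; abel] at this
      rwa [show (m + 1) * L = L + m * L by ring]
    · simp only [Prod.fst_add]
      rcases le_or_gt 0 w.1 with hw | hw <;> nlinarith
    · simp only [Prod.snd_add]
      rcases le_or_gt 0 w.2 with hw | hw <;> nlinarith
    · simp only [Prod.fst_add]; linarith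
    · simp only [Prod.snd_add]; linarith

end

/-- The determinant of two vectors. -/
def det (u v : Vec2) : ℤ := u.1 * v.2 - u.2 * v.1

/-- The vector `c` lies within a narrow belt around a line spanned by a short vector. -/
def Thin (W : ℤ) (c : Vec2) : Prop := ∃ g : Vec2, g ≠ 0 ∧ Bdd W g ∧ |det g c| ≤ W

theorem abs_det_le {B C : ℤ} {u v : Vec2} (hu : Bdd B u) (hv : Bdd C v) :
    |det u v| ≤ 2 * B * C := by
  have hB := hu.nonneg
  calc |det u v| ≤ |u.1 * v.2| + |u.2 * v.1| := abs_sub _ _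
    _ = |u.1| * |v.2| + |u.2| * |v.1| := by rw [abs_mul, abs_mul]
    _ ≤ B * C + B * C := by
      gcongr
      exacts [hu.1, hv.2, hu.2, hv.1]
    _ = 2 * B * C := by ring

theorem exists_last_le (f : ℕ → ℤ) (j : ℤ) {a t : ℕ} (hat : a ≤ t) (ha : f a ≤ j) (ht : j < f t) :
    ∃ i, a ≤ i ∧ i < t ∧ f i ≤ j ∧ ∀ k, i < k → k ≤ t → j < f k := by
  induction t, hat using Nat.le_induction with
  | base => omega
  | succ t hat ih =>
    by_cases h : f t ≤ j
    · refine ⟨t, hat, by omega, h, fun k hk hk' => ?_⟩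
      rwa [show k = t + 1 by omega]
    · obtain ⟨i, h1, h2, h3, h4⟩ := ih (by omega)
      refine ⟨i, h1, by omega, h3, fun k hk hk' => ?_⟩
      rcases Nat.lt_or_ge t k with h5 | h5
      · rwa [show k = t + 1 by omega]
      · exact h4 k hk h5

theorem exists_first_le (f : ℕ → ℤ) (j : ℤ) {t e : ℕ} (hte : t ≤ e) (he : f e ≤ j)
    (ht : j < f t) : ∃ i, t < i ∧ i ≤ e ∧ f i ≤ j ∧ ∀ k, t ≤ k → k < i → j < f k := by
  classical
  have hex : ∃ i, t ≤ i ∧ f i ≤ j := ⟨e, hte, he⟩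
  refine ⟨Nat.find hex, ?_, Nat.find_min' hex ⟨hte, he⟩, (Nat.find_spec hex).2, ?_⟩
  · refine lt_of_le_of_ne (Nat.find_spec hex).1 fun h => ?_
    have := (Nat.find_spec hex).2
    rw [← h] at this
    omega
  · intro k hk hk'
    by_contra hcon
    exact Nat.find_min hex hk' ⟨hk, by omega⟩

section
variable {n : ℕ} {V : VASS n} {L : ℕ} {M W : ℕ} {st : ℕ → Fin n} {c : ℕ → Vec2}

theorem cramer (a w y : Vec2) :
    y.1 * det a w = w.1 * det a y - a.1 * det w y ∧
    y.2 * det a w = w.2 * det a y - a.2 * det w y := by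
  simp only [det]; constructor <;> ring

/-- Two belts around lines of different directions only meet close to the origin. -/
theorem bdd_of_det {B C D : ℤ} {g g' z : Vec2} (hg : Bdd B g) (hg' : Bdd B g') (h : det g g' ≠ 0)
    (h1 : |det g z| ≤ C) (h2 : |det g' z| ≤ D) : Bdd (B * C + B * D) z := by
  have hB := hg.nonneg
  obtain ⟨e1, e2⟩ := cramer g g' z
  have hd : 1 ≤ |det g g'| := Int.one_le_abs h
  constructor
  · calc |z.1| ≤ |z.1| * |det g g'| := le_mul_of_one_le_right (abs_nonneg _) hd
      _ = |g'.1 * det g z - g.1 * det g' z| := by rw [← abs_mul, e1]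
      _ ≤ |g'.1 * det g z| + |g.1 * det g' z| := abs_sub _ _
      _ = |g'.1| * |det g z| + |g.1| * |det g' z| := by rw [abs_mul, abs_mul]
      _ ≤ B * C + B * D := by gcongr; exacts [hg'.1, hg.1]
  · calc |z.2| ≤ |z.2| * |det g g'| := le_mul_of_one_le_right (abs_nonneg _) hd
      _ = |g'.2 * det g z - g.2 * det g' z| := by rw [← abs_mul, e2]
      _ ≤ |g'.2 * det g z| + |g.2 * det g' z| := abs_sub _ _
      _ = |g'.2| * |det g z| + |g.2| * |det g' z| := by rw [abs_mul, abs_mul]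
      _ ≤ B * C + B * D := by gcongr; exacts [hg'.2, hg.2]

/-- Belts around parallel lines are comparable. -/
theorem abs_det_of_parallel {B C : ℤ} {g g' z : Vec2} (hg : Bdd B g) (hg0 : g' ≠ 0)
    (h : det g g' = 0) (h2 : |det g' z| ≤ C) : |det g z| ≤ B * C := by
  have hB := hg.nonneg
  obtain ⟨e1, e2⟩ := cramer g g' z
  rw [h] at e1 e2
  have key : ∀ x y : ℤ, x ≠ 0 → |y| ≤ B → x * det g z = y * det g' z → |det g z| ≤ B * C := by
    intro x y hx hy e
    calc |det g z| ≤ |x| * |det g z| := le_mul_of_one_le_left (abs_nonneg _) (Int.one_le_abs hx)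
      _ = |y| * |det g' z| := by rw [← abs_mul, e, abs_mul]
      _ ≤ B * C := by gcongr
  by_cases hx : g'.1 = 0
  · have hy : g'.2 ≠ 0 := fun hy => hg0 (Prod.ext hx hy)
    exact key _ _ hy hg.2 (by linarith)
  · exact key _ _ hx hg.1 (by linarith)

/-- A vector in the quadrant far from the origin and in a belt is in a belt whose direction lies
in the quadrant. -/
theorem exists_nonneg_direction {W : ℤ} {z : Vec2} (hz : 0 ≤ z.1 ∧ 0 ≤ z.2) (h : Thin W z)
    (hl : W < z.1 + z.2) :
    ∃ g : Vec2, 0 ≤ g.1 ∧ 0 ≤ g.2 ∧ 0 < g.1 + g.2 ∧ Bdd W g ∧ |det g z| ≤ W := by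
  obtain ⟨⟨g1, g2⟩, hg0, ⟨hb1, hb2⟩, hd⟩ := h
  obtain ⟨hz1, hz2⟩ := hz
  have hne : g1 ≠ 0 ∨ g2 ≠ 0 := by
    by_contra hcon
    push Not at hcon
    exact hg0 (Prod.ext hcon.1 hcon.2)
  simp only [det] at *
  rcases lt_trichotomy g1 0 with h1 | h1 | h1 <;> rcases lt_trichotomy g2 0 with h2 | h2 | h2
  · refine ⟨(-g1, -g2), ?_, ?_, ?_, ⟨by simpa using hb1, by simpa using hb2⟩, ?_⟩ <;> simp only
    any_goals omega
    rw [show -g1 * z.2 - -g2 * z.1 = -(g1 * z.2 - g2 * z.1) by ring, abs_neg]; exact hd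
  · refine ⟨(-g1, -g2), ?_, ?_, ?_, ⟨by simpa using hb1, by simpa using hb2⟩, ?_⟩ <;> simp only
    any_goals omega
    rw [show -g1 * z.2 - -g2 * z.1 = -(g1 * z.2 - g2 * z.1) by ring, abs_neg]; exact hd
  · rw [abs_le] at hd
    exfalso; nlinarith
  · refine ⟨(-g1, -g2), ?_, ?_, ?_, ⟨by simpa using hb1, by simpa using hb2⟩, ?_⟩ <;> simp only
    any_goals omega
    rw [show -g1 * z.2 - -g2 * z.1 = -(g1 * z.2 - g2 * z.1) by ring, abs_neg]; exact hd
  · omega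
  · exact ⟨(g1, g2), h1.ge, h2.le, by simp only; omega, ⟨hb1, hb2⟩, hd⟩
  · rw [abs_le] at hd
    exfalso; nlinarith
  · exact ⟨(g1, g2), h1.le, h2.ge, by simp only; omega, ⟨hb1, hb2⟩, hd⟩
  · exact ⟨(g1, g2), h1.le, h2.le, by simp only; omega, ⟨hb1, hb2⟩, hd⟩

/-- The threshold beyond which belts of different directions are disjoint. -/
def beltSep (W M : ℕ) : ℕ := 2 * (W * (W * W + 2 * W * M) + W * W) + W

/-- A bound on the sum of the coordinates along a shortest run in belts. -/
def thinHeight (n W M : ℕ) : ℕ :=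
  beltSep W M + 2 * M + (n * ((2 * (W * W) + 1) * (2 * M + 1))) ^ 2

/-- If a run stays in a fixed belt above two levels, then the hill between the levels can be
lowered when the configurations at the two levels agree up to a shift along the belt. -/
theorem cut_hill (htr : IsTrace V NN L st c) {g δ : Vec2} (hg1 : 0 ≤ g.1) (hg2 : 0 ≤ g.2)
    (hg : 0 < g.1 + g.2) {B : ℤ} {i i' k k' : ℕ} (h2 : i' ≤ k') (h3 : k' ≤ k)
    (hk : k ≤ L) (hii : i ≤ i') (hi : st i' = st i) (hi' : c i' = c i + δ)
    (hks : st k' = st k) (hk' : c k' = c k + δ) (hδ : det g δ = 0)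
    (hbelt : ∀ m, i' ≤ m → m ≤ k' → |det g (c m)| ≤ B)
    (hlev : ∀ m, i' ≤ m → m ≤ k' → B ≤ (c m).1 + (c m).2 - (δ.1 + δ.2)) :
    Walk V NN (i + (k' - i') + (L - k)) (st 0) (c 0) (st L) (c L) := by
  have hw1 := htr.walk' (Nat.zero_le i) (by omega)
  have hw3 := htr.walk' (i := k) (j := L) (by omega) le_rfl
  have htr2 : IsTrace V (fun s x => NN s (x - δ)) (k' - i') (fun m => st (i' + m))
      (fun m => c (i' + m)) := by
    refine ⟨fun m hm => htr.step (i' + m) (by omega), fun m hm => ?_⟩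
    have hp := htr.pos (i' + m) (by omega)
    have hb := hbelt (i' + m) (by omega) (by omega)
    have hl := hlev (i' + m) (by omega) (by omega)
    simp only [NN, det, Prod.fst_sub, Prod.snd_sub] at *
    rw [abs_le] at hb
    generalize (c (i' + m)) = z at *
    constructor
    · rcases hg1.eq_or_lt with h | h
      · rw [← h] at hδ hg
        have hδ1 : δ.1 = 0 := by
          rcases mul_eq_zero.1 (show g.2 * δ.1 = 0 by linarith) with h | h <;> omega
        rw [hδ1]; simpa using hp.1
      · by_contra hcon
        nlinarith
    · rcases hg2.eq_or_lt with h | h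
      · rw [← h] at hδ hg
        have hδ1 : δ.2 = 0 := by
          rcases mul_eq_zero.1 (show g.1 * δ.2 = 0 by linarith) with h | h <;> omega
        rw [hδ1]; simpa using hp.2
      · by_contra hcon
        nlinarith
  have hw2 := (htr2.walk' (Nat.zero_le _) le_rfl).shift (P' := NN) (-δ)
    (fun s x hx => by simpa [sub_eq_add_neg] using hx)
  simp only [add_zero, show i' + (k' - i') = k' by omega, hi', hk', hi, hks, add_neg_cancel_right,
    Nat.sub_zero] at hw1 hw2
  exact (hw1.trans hw2).trans hw3

theorem height_le_of_thin (hM : EffBdd V M) (htr : IsTrace V NN L st c) (h0 : c 0 = 0)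
    (hL : c L = 0) (hmin : ∀ L', Walk V NN L' (st 0) 0 (st L) 0 → L ≤ L')
    (hthin : ∀ i ≤ L, Thin W (c i)) {t : ℕ} (ht : t ≤ L) :
    (c t).1 + (c t).2 ≤ thinHeight n W M := by
  by_contra! hcon
  set f : ℕ → ℤ := fun i => (c i).1 + (c i).2 with hf
  have hstep : ∀ i < L, |f (i + 1) - f i| ≤ 2 * M := by
    intro i hi
    obtain ⟨a1, a2⟩ := htr.bdd_step hM hi
    simp only [Prod.fst_sub, Prod.snd_sub, abs_le, hf] at *
    constructor <;> linarith
  set J : ℤ := (beltSep W M : ℤ) with hJ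
  have hf0 : f 0 = 0 := by simp [hf, h0]
  have hfL : f L = 0 := by simp [hf, hL]
  set C : ℕ := n * ((2 * (W * W) + 1) * (2 * M + 1)) with hC
  have hcon' : J + 2 * M + (C : ℤ) ^ 2 < f t := by
    simp only [thinHeight] at hcon
    push_cast at hcon
    simp only [hf, hJ, hC]
    push_cast
    exact hcon
  have hJ0 : 0 ≤ J := by positivity
  have hC0 : (0 : ℤ) ≤ (C : ℤ) ^ 2 := by positivity
  have hM0 : (0 : ℤ) ≤ M := by positivity
  obtain ⟨s, -, hst, hs, hs'⟩ := exists_last_le f J (Nat.zero_le t) (by omega) (by omega)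
  obtain ⟨e, hte, heL, he, he'⟩ := exists_first_le f J ht (by omega) (by omega)
  have hin : ∀ m, s < m → m < e → J < f m := fun m h1 h2 => by
    rcases le_total m t with h | h
    · exact hs' m h1 h
    · exact he' m h h2
  have hWJ : (W : ℤ) ≤ J := by
    simp only [hJ, beltSep]; push_cast
    have : (0 : ℤ) ≤ 2 * (W * (W * W + 2 * W * M) + W * W) := by positivity
    linarith
  obtain ⟨g, hg1, hg2, hg, hgb, hgd⟩ := exists_nonneg_direction (htr.pos (s + 1) (by omega))
    (hthin (s + 1) (by omega))
    (by have := hin (s + 1) (by omega) (by omega); simp only [hf] at this; linarith)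
  have hW1 : (1 : ℤ) ≤ W := by
    have h1 := (le_abs_self _).trans hgb.1
    have h2 := (le_abs_self _).trans hgb.2
    omega
  have hbelt : ∀ m, s + 1 ≤ m → m < e → |det g (c m)| ≤ W * W := by
    intro m hm
    induction m, hm using Nat.le_induction with
    | base => intro _; nlinarith
    | succ m hm ih =>
      intro hme
      have h1 := ih (by omega)
      have hb := htr.bdd_step hM (i := m) (by omega)
      have h2 := abs_det_le hgb hb
      have h3 : |det g (c (m + 1))| ≤ W * W + 2 * W * M := by
        have : det g (c (m + 1)) = det g (c m) + det g (c (m + 1) - c m) := by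
          simp only [det, Prod.fst_sub, Prod.snd_sub]; ring
        rw [this]
        exact (abs_add_le _ _).trans (by linarith)
      obtain ⟨g', hg0', hgb', hgd'⟩ := hthin (m + 1) (by omega)
      by_cases hdet : det g g' = 0
      · exact abs_det_of_parallel hgb hg0' hdet hgd'
      · exfalso
        obtain ⟨b1, b2⟩ := bdd_of_det hgb hgb' hdet h3 hgd'
        have hp := htr.pos (m + 1) (by omega)
        rw [abs_of_nonneg hp.1] at b1
        rw [abs_of_nonneg hp.2] at b2
        have h4 := hin (m + 1) (by omega) hme
        simp only [hf, hJ, beltSep] at h4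
        push_cast at h4
        linarith
  have hout : ∀ k : Fin (C ^ 2 + 1), ∃ i, s + 1 ≤ i ∧ i < t ∧ f i ≤ J + 2 * M + k ∧
      ∀ m, i < m → m ≤ t → J + 2 * M + k < f m := by
    intro k
    have hk : (k : ℤ) ≤ (C : ℤ) ^ 2 := by exact_mod_cast Nat.lt_succ_iff.1 k.2
    refine exists_last_le f _ (by omega) ?_ (by omega)
    have := abs_le.1 (hstep s (by omega))
    omega
  have hback : ∀ k : Fin (C ^ 2 + 1), ∃ i, t < i ∧ i ≤ e - 1 ∧ f i ≤ J + 2 * M + k ∧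
      ∀ m, t ≤ m → m < i → J + 2 * M + k < f m := by
    intro k
    have hk : (k : ℤ) ≤ (C : ℤ) ^ 2 := by exact_mod_cast Nat.lt_succ_iff.1 k.2
    refine exists_first_le f _ (by omega) ?_ (by omega)
    have := abs_le.1 (hstep (e - 1) (by omega))
    rw [show e - 1 + 1 = e by omega] at this
    omega
  choose o ho1 ho2 ho3 ho4 using hout
  choose b hb1 hb2 hb3 hb4 using hback
  set S : Finset (Fin n × ℤ × ℤ) := Finset.univ ×ˢ
    (Finset.Icc (-(W * W : ℤ)) (W * W) ×ˢ Finset.Icc (-(2 * M : ℤ)) 0) with hS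
  have hScard : (S ×ˢ S).card = C ^ 2 := by
    simp only [hS, Finset.card_product, Finset.card_univ, Fintype.card_fin, Int.card_Icc, hC]
    rw [show ((W * W : ℤ) + 1 - -(W * W)).toNat = 2 * (W * W) + 1 by
      rw [show ((W * W : ℤ) + 1 - -(W * W)) = ((2 * (W * W) + 1 : ℕ) : ℤ) by push_cast; ring]
      exact Int.toNat_natCast _]
    rw [show ((0 : ℤ) + 1 - -(2 * M)).toNat = 2 * M + 1 by omega]
    ring
  obtain ⟨k1, -, k2, -, hne, hkey⟩ := Finset.exists_ne_map_eq_of_card_lt_of_maps_to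
    (s := (Finset.univ : Finset (Fin (C ^ 2 + 1)))) (t := S ×ˢ S)
    (f := fun k => ((st (o k), det g (c (o k)), f (o k) - (J + 2 * M + k)),
      (st (b k), det g (c (b k)), f (b k) - (J + 2 * M + k))))
    (by rw [hScard]; simp) (by
      intro k _
      have e1 := abs_le.1 (hbelt (o k) (ho1 k) (by have := ho2 k; omega))
      have e2 := abs_le.1 (hbelt (b k) (by have := hb1 k; omega) (by have := hb2 k; omega))
      have e3 := abs_le.1 (hstep (o k) (by have := ho2 k; omega))
      have e4 := ho4 k (o k + 1) (by omega) (ho2 k)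
      have e5 := abs_le.1 (hstep (b k - 1) (by have := hb2 k; omega))
      rw [show b k - 1 + 1 = b k by have := hb1 k; omega] at e5
      have e6 := hb4 k (b k - 1) (by have := hb1 k; omega) (by have := hb1 k; omega)
      have e7 := ho3 k
      have e8 := hb3 k
      simp only [hS, Finset.coe_product, Finset.coe_univ, Finset.coe_Icc, Set.mem_prod,
        Set.mem_univ, Set.mem_Icc, true_and]
      refine ⟨⟨e1, ?_, ?_⟩, e2, ?_, ?_⟩ <;> omega)
  wlog hlt : k1 < k2 generalizing k1 k2
  · exact this k2 k1 hne.symm hkey.symm (lt_of_le_of_ne (not_lt.1 hlt) hne.symm)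
  simp only [Prod.mk.injEq] at hkey
  obtain ⟨⟨x1, x2, x3⟩, y1, y2, y3⟩ := hkey
  have hltZ : (k1 : ℤ) < k2 := by exact_mod_cast hlt
  have hoo : o k1 < o k2 := by
    by_contra! hle
    rcases hle.eq_or_lt with h | h
    · rw [h] at x3; omega
    · have h1 := ho4 k2 (o k1) h (ho2 k1).le
      have h2 := ho3 k1
      omega
  have hbb : b k2 < b k1 := by
    by_contra! hle
    rcases hle.eq_or_lt with h | h
    · rw [h] at y3; omega
    · have h1 := hb4 k2 (b k1) (hb1 k1).le h
      have h2 := hb3 k1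
      omega
  have hδ : c (b k2) - c (b k1) = c (o k2) - c (o k1) := by
    simp only [hf, det] at x2 x3 y2 y3
    have e1 : (g.1 + g.2) * ((c (b k2)).1 - (c (b k1)).1) =
        (g.1 + g.2) * ((c (o k2)).1 - (c (o k1)).1) := by
      linear_combination g.1 * (x3 - y3) + y2 - x2
    have e2 : (g.1 + g.2) * ((c (b k2)).2 - (c (b k1)).2) =
        (g.1 + g.2) * ((c (o k2)).2 - (c (o k1)).2) := by
      linear_combination g.2 * (x3 - y3) - y2 + x2
    exact Prod.ext (mul_left_cancel₀ hg.ne' e1) (mul_left_cancel₀ hg.ne' e2)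
  have hwalk := cut_hill htr (g := g) (δ := c (o k2) - c (o k1)) (B := W * W) hg1 hg2 hg
    (i := o k1) (i' := o k2) (k := b k1) (k' := b k2) (by have := ho2 k2; have := hb1 k2; omega)
    hbb.le (by have := hb2 k1; omega) hoo.le x1.symm (by abel) y1.symm
    (by rw [← hδ]; abel) (by simp only [det, Prod.fst_sub, Prod.snd_sub] at *; linarith)
    (fun m h1 h2 => hbelt m (by have := ho1 k2; omega) (by have := hb2 k2; omega))
    (fun m h1 h2 => by
      have hJW : (W * W : ℤ) ≤ J := by
        simp only [hJ, beltSep]; push_cast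
        have : (0 : ℤ) ≤ 2 * (W * (W * W + 2 * W * M)) + W * W + W := by positivity
        linarith
      have hm : J + 2 * M + k2 - 2 * M ≤ f m := by
        rcases h1.eq_or_lt with h | h
        · have e3 := abs_le.1 (hstep (o k2) (by have := ho2 k2; omega))
          have e4 := ho4 k2 (o k2 + 1) (by omega) (ho2 k2)
          rw [← h]; omega
        rcases h2.eq_or_lt with h' | h'
        · have e5 := abs_le.1 (hstep (b k2 - 1) (by have := hb2 k2; omega))
          rw [show b k2 - 1 + 1 = b k2 by have := hb1 k2; omega] at e5
          have e6 := hb4 k2 (b k2 - 1) (by have := hb1 k2; omega) (by have := hb1 k2; omega)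
          rw [h']; omega
        · rcases le_total m t with h5 | h5
          · have := ho4 k2 m h h5; omega
          · have := hb4 k2 m h5 h'; omega
      simp only [Prod.fst_sub, Prod.snd_sub]
      simp only [hf] at hm x3
      have : (0 : ℤ) ≤ k1 := by positivity
      linarith)
  rw [h0, hL] at hwalk
  have := hmin _ hwalk
  have := hb2 k1
  have := ho2 k2
  have := hb1 k2
  omega

end

/-- The scalar product of two vectors. -/
def dot (u v : Vec2) : ℤ := u.1 * v.1 + u.2 * v.2

theorem abs_dot_le {B C : ℤ} {u v : Vec2} (hu : Bdd B u) (hv : Bdd C v) :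
    |dot u v| ≤ 2 * B * C := by
  have h := abs_det_le (u := u) (v := (-v.2, v.1)) hu ⟨by simpa using hv.2, hv.1⟩
  rwa [show det u (-v.2, v.1) = dot u v by simp only [det, dot]; ring] at h

theorem dot_sub_smul (f z g : Vec2) (E : ℤ) : dot f (z - E • g) = dot f z - E * dot f g := by
  simp only [dot, Prod.fst_sub, Prod.snd_sub, Prod.smul_fst, Prod.smul_snd, smul_eq_mul]; ring

/-- A bound on the smallest points of a congruence class inside a polyhedral cone. -/
def repBound (K E : ℤ) : ℤ := 4 * K * (K + 2 * K * K * E)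

/-- If a tight constraint `f` separates `z` from the axes, then there is a short semipositive
vector along which one can descend without violating any constraint. -/
theorem exists_descent {K E : ℤ} (hK : 1 ≤ K) (hE : 1 ≤ E) {Fs : Set Vec2}
    (hF : ∀ f ∈ Fs, f ≠ 0 ∧ Bdd K f) {z : Vec2} (hz1 : 0 < z.1) (hz2 : 0 < z.2)
    (hz : ∀ f ∈ Fs, K ≤ dot f z) (hl : repBound K E < z.1 + z.2) :
    ∃ g : Vec2, 0 < g.1 + g.2 ∧ ∀ f ∈ Fs, K ≤ dot f (z - E • g) := by
  by_cases htight : ∃ f ∈ Fs, dot f z < K + 2 * K * K * E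
  · obtain ⟨f, hf, hft⟩ := htight
    obtain ⟨hf0, hfb⟩ := hF f hf
    have hfz := hz f hf
    set T := K + 2 * K * K * E with hT
    have hT0 : 0 < T := by positivity
    have hTl : T < z.1 + z.2 := by
      refine lt_of_le_of_lt ?_ hl
      simp only [repBound, ← hT]; nlinarith
    have hpar : ∀ g : Vec2, dot f g = 0 → Bdd K g → ∀ f' ∈ Fs,
        (det f f' = 0 → dot f' g = 0) → K ≤ dot f' (z - E • g) := by
      intro g hg hgb f' hf' hpar
      obtain ⟨-, hfb'⟩ := hF f' hf'
      rw [dot_sub_smul]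
      by_cases ht : dot f' z < T
      · have hdet : det f f' = 0 := by
          by_contra hne
          have hb := bdd_of_det (B := K) (C := T) (D := T) (g := (f.2, -f.1)) (g' := (f'.2, -f'.1))
            (z := z) ⟨hfb.2, by simpa using hfb.1⟩ ⟨hfb'.2, by simpa using hfb'.1⟩
            (by simp only [det] at hne ⊢; intro h; apply hne; linarith)
            (by rw [show det (f.2, -f.1) z = dot f z by simp only [det, dot]; ring,
                  abs_le]; constructor <;> linarith)
            (by rw [show det (f'.2, -f'.1) z = dot f' z by simp only [det, dot]; ring,
                  abs_le]; have := hz f' hf'; constructor <;> linarith)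
          have h1 := (le_abs_self _).trans hb.1
          have h2 := (le_abs_self _).trans hb.2
          simp only [repBound, ← hT] at hl
          nlinarith
        rw [hpar hdet]
        simpa using hz f' hf'
      · have h1 := (le_abs_self _).trans (abs_dot_le hfb' hgb)
        have : E * dot f' g ≤ E * (2 * K * K) := by gcongr
        rw [hT] at ht; linarith
    have hne : f.1 ≠ 0 ∨ f.2 ≠ 0 := by
      by_contra hcon
      push Not at hcon
      exact hf0 (Prod.ext hcon.1 hcon.2)
    rcases le_or_gt f.1 0 with h1 | h1 <;> rcases le_or_gt f.2 0 with h2 | h2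
    · simp only [dot] at hfz; nlinarith
    · refine ⟨(f.2, -f.1), by simp only; omega, fun f' hf' => hpar _ (by simp only [dot]; ring)
        ⟨hfb.2, by simpa using hfb.1⟩ f' hf' fun h => ?_⟩
      simp only [det, dot] at h ⊢; linarith
    · refine ⟨(-f.2, f.1), by simp only; omega, fun f' hf' => hpar _ (by simp only [dot]; ring)
        ⟨by simpa using hfb.2, hfb.1⟩ f' hf' fun h => ?_⟩
      simp only [det, dot] at h ⊢; linarith
    · simp only [dot] at hft; nlinarith
  · push Not at htight
    refine ⟨(1, 0), by simp, fun f hf => ?_⟩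
    have h1 := htight f hf
    have h2 := (le_abs_self _).trans (hF f hf).2.1
    rw [dot_sub_smul]
    simp only [dot, mul_one, mul_zero, add_zero] at h1 ⊢
    nlinarith [mul_nonneg (mul_nonneg (by linarith : 0 ≤ K) (by linarith : 0 ≤ K - 1))
      (by linarith : 0 ≤ E), mul_nonneg (by linarith : 0 ≤ E) (by linarith : 0 ≤ K - f.1),
      mul_pos (by linarith : 0 < E) (by linarith : 0 < K)]

theorem exists_small_rep {K E : ℤ} (hK : 1 ≤ K) (hE : 1 ≤ E) {Fs : Set Vec2}
    (hF : ∀ f ∈ Fs, f ≠ 0 ∧ Bdd K f) (hx : ((1, 0) : Vec2) ∈ Fs) (hy : ((0, 1) : Vec2) ∈ Fs)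
    {c : Vec2} (hc : ∀ f ∈ Fs, K ≤ dot f c) :
    ∃ z y : Vec2, z = c + E • y ∧ (∀ f ∈ Fs, K ≤ dot f z) ∧ z.1 + z.2 ≤ repBound K E := by
  classical
  have hpos : ∀ z, (∀ f ∈ Fs, K ≤ dot f z) → 0 < z.1 ∧ 0 < z.2 := by
    intro z hz
    have h1 := hz _ hx
    have h2 := hz _ hy
    simp only [dot] at h1 h2
    omega
  have hex : ∃ s : ℕ, ∃ z y : Vec2, z = c + E • y ∧ (∀ f ∈ Fs, K ≤ dot f z) ∧ z.1 + z.2 = s :=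
    ⟨(c.1 + c.2).toNat, c, 0, by simp, hc, by have := hpos c hc; omega⟩
  obtain ⟨z, y, hzy, hz, hs⟩ := Nat.find_spec hex
  refine ⟨z, y, hzy, hz, ?_⟩
  by_contra! hcon
  obtain ⟨hz1, hz2⟩ := hpos z hz
  obtain ⟨g, hg, hgz⟩ := exists_descent hK hE hF hz1 hz2 hz hcon
  obtain ⟨h1, h2⟩ := hpos _ hgz
  have hEg : 0 < E * (g.1 + g.2) := by positivity
  simp only [Prod.fst_sub, Prod.snd_sub, Prod.smul_fst, Prod.smul_snd, smul_eq_mul] at h1 h2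
  refine Nat.find_min hex (m := (z.1 + z.2 - E * (g.1 + g.2)).toNat) (by
    have : E * (g.1 + g.2) = E * g.1 + E * g.2 := by ring
    omega)
    ⟨z - E • g, y - g, ?_, hgz, ?_⟩
  · rw [hzy, smul_sub]; abel
  · simp only [Prod.fst_sub, Prod.snd_sub, Prod.smul_fst, Prod.smul_snd, smul_eq_mul]
    have : E * (g.1 + g.2) = E * g.1 + E * g.2 := by ring
    omega

section
variable {n : ℕ} {V V' : VASS n} {P P' : Fin n → Vec2 → Prop} {L : ℕ} {p q q' r : Fin n}
  {u w : Vec2} {M : ℤ}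

/-- The vector addition system with all transitions reversed. -/
def reverse (V : VASS n) : VASS n := V.image fun t => (t.2.2, -t.2.1, t.1)

theorem mem_reverse {v : Vec2} : (q, v, p) ∈ reverse V ↔ (p, -v, q) ∈ V := by
  rw [reverse, Finset.mem_image]
  constructor
  · rintro ⟨⟨a, b, d⟩, h, e⟩
    simp only [Prod.mk.injEq] at e
    obtain ⟨rfl, rfl, rfl⟩ := e
    simpa using h
  · exact fun h => ⟨_, h, by simp⟩

theorem EffBdd.reverse (hM : EffBdd V M) : EffBdd (reverse V) M := by
  rintro ⟨q, v, p⟩ h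
  have := hM _ (mem_reverse.1 h)
  simpa [Bdd] using this

theorem Walk.rev (hV : ∀ p v q, (p, v, q) ∈ V → (q, -v, p) ∈ V') (h : Walk V P L p u q w) :
    Walk V' P L q w p u := by
  induction h with
  | nil h => exact .nil h
  | @cons L p q r u v w hp ht hw ih =>
    have hlast : Walk V' P 0 p (u + v + -v) p u := by
      rw [add_neg_cancel_right]; exact .nil hp
    exact ih.trans (.cons hw.source (hV _ _ _ ht) hlast)

theorem Walk.to_reverse (h : Walk V P L p u q w) : Walk (reverse V) P L q w p u :=
  h.rev fun _ _ _ h => mem_reverse.2 (by simpa using h)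

theorem Walk.of_reverse (h : Walk (reverse V) P L p u q w) : Walk V P L q w p u :=
  h.rev fun _ _ _ h => mem_reverse.1 h

theorem Walk.map (φ : Vec2 →+ Vec2) (hV : ∀ p v q, (p, v, q) ∈ V → (p, φ v, q) ∈ V')
    (hP : ∀ s x, P s x → P' s (φ x)) (h : Walk V P L p u q w) :
    Walk V' P' L p (φ u) q (φ w) := by
  induction h with
  | nil h => exact .nil (hP _ _ h)
  | cons hp ht hw ih => exact .cons (hP _ _ hp) (hV _ _ _ ht) (by rwa [← map_add])

/-- From `(q, 0)` one can quickly reach `(r, z)`, for all `z` in some polyhedral cone around `c`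
which are congruent to `c` for some modulus. -/
def Fat (V : VASS n) (q r : Fin n) (K : ℤ) (c : Vec2) : Prop :=
  ∃ D : ℤ, 0 < D ∧ D ≤ K ∧ ∃ f f' : Vec2, (f ≠ 0 ∧ Bdd K f) ∧ (f' ≠ 0 ∧ Bdd K f') ∧
    K ≤ dot f c ∧ K ≤ dot f' c ∧
    ∀ z y : Vec2, z = c + D • y → K ≤ z.1 → K ≤ z.2 → K ≤ dot f z → K ≤ dot f' z →
      ∃ L : ℕ, (L : ℤ) ≤ K * (z.1 + z.2 + 1) ∧ Walk V NN L q 0 r z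

theorem Fat.exists_walk {K : ℤ} {c : Vec2} (h : Fat V q r K c) (h' : Fat (reverse V) q' r K c)
    (hc1 : K ≤ c.1) (hc2 : K ≤ c.2) :
    ∃ L : ℕ, (L : ℤ) ≤ 2 * (K * (repBound K (K * K) + 1)) ∧ Walk V NN L q 0 q' 0 := by
  obtain ⟨D, hD, hDK, f, g, hf, hg, hfc, hgc, H⟩ := h
  obtain ⟨D', hD', hDK', f', g', hf', hg', hfc', hgc', H'⟩ := h'
  have hK : 1 ≤ K := by linarith
  obtain ⟨z, y, hz, hzF, hzb⟩ := exists_small_rep (K := K) (E := D * D') (c := c) hK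
    (by nlinarith) (Fs := {f, g, f', g', (1, 0), (0, 1)})
    (by
      have h1 : |(1 : ℤ)| ≤ K := by simpa using hK
      have h0 : |(0 : ℤ)| ≤ K := by simpa using hK.trans' (by norm_num)
      rintro x (rfl | rfl | rfl | rfl | rfl | rfl)
      · exact hf
      · exact hg
      · exact hf'
      · exact hg'
      · exact ⟨by simp, h1, h0⟩
      · exact ⟨by simp, h0, h1⟩)
    (by simp) (by simp)
    (by
      rintro x (rfl | rfl | rfl | rfl | rfl | rfl)
      · exact hfc
      · exact hgc
      · exact hfc'
      · exact hgc'
      · simpa [dot] using hc1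
      · simpa [dot] using hc2)
  have hz1 : K ≤ z.1 := by simpa [dot] using hzF (1, 0) (by simp)
  have hz2 : K ≤ z.2 := by simpa [dot] using hzF (0, 1) (by simp)
  obtain ⟨L, hL, hw⟩ := H z (D' • y) (by rw [hz, smul_smul]) hz1 hz2
    (hzF _ (by simp)) (hzF _ (by simp))
  obtain ⟨L', hL', hw'⟩ := H' z (D • y) (by rw [hz, smul_smul, mul_comm]) hz1 hz2
    (hzF _ (by simp)) (hzF _ (by simp))
  refine ⟨L + L', ?_, hw.trans hw'.of_reverse⟩
  have hrep : repBound K (D * D') ≤ repBound K (K * K) := by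
    simp only [repBound]; gcongr
  have : K * (z.1 + z.2 + 1) ≤ K * (repBound K (K * K) + 1) := by
    gcongr; linarith
  push_cast; linarith

end

/-- If `f` grows slowly but eventually exceeds many levels, then some key occurs at two record
values of `f`. -/
theorem exists_record_pair {ι : Type*} [Fintype ι] (f : ℕ → ℤ) (key : ℕ → ι) {a M : ℤ} (hM : 0 ≤ M)
    {s t : ℕ} (hst : s ≤ t) (hs : f s ≤ a) (hstep : ∀ i, s ≤ i → i < t → f (i + 1) ≤ f i + M)
    (ht : a + Fintype.card ι * M < f t) :
    ∃ i j, s ≤ i ∧ i < j ∧ j ≤ t ∧ key i = key j ∧ a < f i ∧ f i < f j ∧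
      ∀ k, s ≤ k → k ≤ j → f k ≤ a + (Fintype.card ι + 1) * M := by
  classical
  have hfirst : ∀ l : Fin (Fintype.card ι + 1), ∃ i, s < i ∧ i ≤ t ∧ a + l * M < f i ∧
      f i ≤ a + (l + 1) * M ∧ ∀ k, s ≤ k → k < i → f k ≤ a + l * M := by
    intro l
    have hl : (l : ℤ) ≤ Fintype.card ι := by exact_mod_cast Nat.lt_succ_iff.1 l.2
    have hlM : (l : ℤ) * M ≤ Fintype.card ι * M := by gcongr
    have hl0 : 0 ≤ (l : ℤ) * M := by positivity
    obtain ⟨i, h1, h2, h3, h4⟩ := exists_first_le (fun i => -f i) (-(a + l * M) - 1) hst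
      (by omega) (by omega)
    refine ⟨i, h1, h2, by omega, ?_, fun k hk hk' => by have := h4 k hk hk'; omega⟩
    have h5 := hstep (i - 1) (by omega) (by omega)
    have h6 := h4 (i - 1) (by omega) (by omega)
    rw [show i - 1 + 1 = i by omega] at h5
    linarith
  choose τ h1 h2 h3 h4 h5 using hfirst
  obtain ⟨x, y, hxy, he⟩ := Fintype.exists_ne_map_eq_of_card_lt (fun l => key (τ l)) (by simp)
  wlog hlt : x < y generalizing x y
  · exact this y x hxy.symm he.symm (lt_of_le_of_ne (not_lt.1 hlt) hxy.symm)
  have hle : (x : ℤ) + 1 ≤ y := by exact_mod_cast hlt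
  have hleM : ((x : ℤ) + 1) * M ≤ y * M := by gcongr
  have hf : f (τ x) < f (τ y) := by linarith [h4 x, h3 y]
  have hy : (y : ℤ) ≤ Fintype.card ι := by exact_mod_cast Nat.lt_succ_iff.1 y.2
  have hyM : ((y : ℤ) + 1) * M ≤ (Fintype.card ι + 1) * M := by gcongr
  refine ⟨τ x, τ y, (h1 x).le, ?_, h2 y, he, ?_, hf, fun k hk hk' => ?_⟩
  · by_contra! hcon
    rcases hcon.lt_or_eq with hcon | hcon
    · have := h5 x (τ y) (h1 y).le hcon
      have := h3 x
      linarith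
    · rw [hcon] at hf; exact lt_irrefl _ hf
  · have : 0 ≤ (x : ℤ) * M := by positivity
    linarith [h3 x]
  · rcases hk'.lt_or_eq with hk' | rfl
    · have := h5 y k hk hk'
      linarith
    · linarith [h4 y]

section
variable {n : ℕ} {V : VASS n} {L : ℕ} {p q r : Fin n} {u w : Vec2} {M : ℕ} {st : ℕ → Fin n}
  {c : ℕ → Vec2}

/-- The vectors of the box `[0, N]²`. -/
def Box {n : ℕ} (N : ℕ) (_ : Fin n) (x : Vec2) : Prop :=
  (0 ≤ x.1 ∧ x.1 ≤ N) ∧ (0 ≤ x.2 ∧ x.2 ≤ N)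

theorem Walk.shorten_box {N : ℕ} (h : Walk V (Box N) L p u q w) :
    ∃ L', L' ≤ n * (N + 1) ^ 2 ∧ Walk V (Box N) L' p u q w := by
  obtain ⟨L', w', h1, h2, h3⟩ := h.shorten (ι := Fin (N + 1) × Fin (N + 1)) ⊥
    (by rintro s x d hd hx; rw [AddSubmonoid.mem_bot] at hd; simpa [hd] using hx)
    (fun x => (Fin.ofNat (N + 1) x.1.toNat, Fin.ofNat (N + 1) x.2.toNat))
    (by
      intro l s x y _ hl hk
      obtain ⟨⟨hx1, hx2⟩, hx3, hx4⟩ := hl.source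
      obtain ⟨⟨hy1, hy2⟩, hy3, hy4⟩ := hl.target
      simp only [Prod.mk.injEq, Fin.ext_iff, Fin.ofNat] at hk
      rw [Nat.mod_eq_of_lt (by omega), Nat.mod_eq_of_lt (by omega), Nat.mod_eq_of_lt (by omega),
        Nat.mod_eq_of_lt (by omega)] at hk
      rw [AddSubmonoid.mem_bot, sub_eq_zero]
      exact Prod.ext (by omega) (by omega))
  refine ⟨L', by simpa [sq] using h1, ?_⟩
  rw [AddSubmonoid.mem_bot, sub_eq_zero] at h2
  rwa [h2] at h3

/-- The growth factor of runs without semipositive cycles. -/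
def growth (n M : ℕ) : ℕ := (1 + M) * (1 + 2 * n * M)

theorem one_le_growth (n M : ℕ) : 1 ≤ growth n M :=
  Nat.one_le_iff_ne_zero.2 (by simp [growth])

/-- Along a trace in which no configuration dominates an earlier one with the same state, the
vectors are bounded exponentially in the number of visited states. -/
theorem bdd_of_no_increase (hM : EffBdd V M) (htr : IsTrace V NN L st c) (h0 : c 0 = 0) (k τ : ℕ)
    (hτ : τ ≤ L) (hcard : ((Finset.range (τ + 1)).image st).card ≤ k)
    (hno : ∀ i j, i < j → j ≤ τ → st i = st j → c i ≤ c j → c i = c j) {j : ℕ} (hj : j ≤ τ) :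
    (c j).1 + 1 ≤ growth n M ^ k ∧ (c j).2 + 1 ≤ growth n M ^ k := by
  classical
  have hR := one_le_growth n M
  have hRpow : ∀ k, (1 : ℤ) ≤ (growth n M : ℤ) ^ k := fun k => by
    exact_mod_cast Nat.one_le_pow k _ hR
  induction k generalizing τ j with
  | zero =>
    have : st 0 ∈ (Finset.range (τ + 1)).image st :=
      Finset.mem_image_of_mem _ (by simp)
    rw [Nat.le_zero, Finset.card_eq_zero] at hcard
    simp [hcard] at this
  | succ k ih =>
  have hmono : (growth n M : ℤ) ^ k ≤ (growth n M : ℤ) ^ (k + 1) := by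
    exact_mod_cast Nat.pow_le_pow_right hR (Nat.le_succ k)
  by_cases hk : ((Finset.range (τ + 1)).image st).card ≤ k
  · have := ih τ hτ hk hno hj
    exact ⟨this.1.trans hmono, this.2.trans hmono⟩
  have hex : ∃ σ, k + 1 ≤ ((Finset.range (σ + 1)).image st).card := ⟨τ, by omega⟩
  set σ := Nat.find hex with hσ
  have hστ : σ ≤ τ := Nat.find_min' hex (by omega)
  obtain ⟨B, hB⟩ : ∃ B : ℕ, (B : ℤ) + 1 = (growth n M : ℤ) ^ k + M :=
    ⟨growth n M ^ k + M - 1, by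
      have := Nat.one_le_pow k _ hR
      push_cast [Nat.cast_sub (by omega : 1 ≤ growth n M ^ k + M)]; ring⟩
  have hlt : ∀ i < σ, (c i).1 + 1 ≤ growth n M ^ k ∧ (c i).2 + 1 ≤ growth n M ^ k := by
    intro i hi
    refine ih (σ - 1) (by omega) ?_ (fun i j h1 h2 => hno i j h1 (by omega)) (j := i) (by omega)
    have := Nat.find_min hex (m := σ - 1) (by omega)
    omega
  have hle : ∀ i ≤ σ, (c i).1 ≤ B ∧ (c i).2 ≤ B := by
    intro i hi
    rcases hi.lt_or_eq with hi | rfl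
    · have := hlt i hi; omega
    rcases Nat.eq_zero_or_pos σ with h | h
    · rw [h, h0]; simp
    have h1 := hlt (σ - 1) (by omega)
    have h2 := htr.bdd_step hM (i := σ - 1) (by omega)
    rw [show σ - 1 + 1 = σ by omega] at h2
    have h3 := (le_abs_self _).trans h2.1
    have h4 := (le_abs_self _).trans h2.2
    simp only [Prod.fst_sub, Prod.snd_sub] at h3 h4
    omega
  have himg : (Finset.range (σ + 1)).image st = (Finset.range (τ + 1)).image st :=
    Finset.eq_of_subset_of_card_le
      (Finset.image_subset_image (Finset.range_mono (by omega)))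
      (hcard.trans (Nat.find_spec hex))
  have hmin : ∀ i ≤ τ, (c i).1 ≤ B ∨ (c i).2 ≤ B := by
    intro i hi
    have hmem : st i ∈ (Finset.range (σ + 1)).image st := by
      rw [himg]; exact Finset.mem_image_of_mem _ (by simp; omega)
    obtain ⟨i', hi', he⟩ := Finset.mem_image.1 hmem
    have hi'σ : i' ≤ σ := by simp at hi'; omega
    have hb := hle i' hi'σ
    rcases le_or_gt i σ with h | h
    · exact Or.inl (hle i h).1
    by_contra! hcon
    have := hno i' i (by omega) hi he
      (Prod.le_def.2 ⟨by linarith [hcon.1], by linarith [hcon.2]⟩)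
    rw [this] at hb
    omega
  suffices hmax : max (c j).1 (c j).2 ≤ B + (n * (2 * (B + 1)) : ℕ) * M by
    have h1 : (growth n M : ℤ) ^ (k + 1) = growth n M ^ k * ((1 + M) * (1 + 2 * n * M)) := by
      rw [pow_succ]; simp [growth]
    have h2 : ((growth n M : ℤ) ^ k + M) ≤ growth n M ^ k * (1 + M) := by
      nlinarith [hRpow k]
    have h3 : ((growth n M : ℤ) ^ k + M) * (1 + 2 * n * M) ≤
        growth n M ^ k * (1 + M) * (1 + 2 * n * M) := by gcongr
    rw [← hB] at h3
    push_cast at hmax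
    have h4 := (le_max_left _ _).trans hmax
    have h5 := (le_max_right _ _).trans hmax
    constructor <;> nlinarith
  by_contra! hcon
  have hjσ : σ ≤ j := by
    by_contra! h
    have := hle j h.le
    have h2 : max (c j).1 (c j).2 ≤ B := max_le this.1 this.2
    have h3 : (0 : ℤ) ≤ (n * (2 * (B + 1)) : ℕ) * M := by positivity
    linarith
  obtain ⟨i, i', hi, hii, hi', hkey, hbig, hrec, -⟩ := exists_record_pair
    (ι := Fin n × Bool × Fin (B + 1)) (fun i => max (c i).1 (c i).2)
    (fun i => (st i, decide ((c i).1 ≤ B),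
      if (c i).1 ≤ B then Fin.ofNat (B + 1) (c i).1.toNat else Fin.ofNat (B + 1) (c i).2.toNat))
    (a := B) (M := M) (by positivity) hjσ (max_le (hle σ le_rfl).1 (hle σ le_rfl).2)
    (by
      intro i hi hij
      have h2 := htr.bdd_step hM (i := i) (by omega)
      have h3 := (le_abs_self _).trans h2.1
      have h4 := (le_abs_self _).trans h2.2
      simp only [Prod.fst_sub, Prod.snd_sub] at h3 h4
      omega)
    (by simpa using hcon)
  have hpi := htr.pos i (by omega)
  have hpi' := htr.pos i' (by omega)
  have hmi := hmin i (by omega)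
  have hmi' := hmin i' (by omega)
  simp only [Prod.mk.injEq, decide_eq_decide] at hkey
  obtain ⟨hst, hdec, hval⟩ := hkey
  simp only [NN] at hpi hpi'
  have hdom : c i ≤ c i' := by
    rw [Prod.le_def]
    by_cases hx : (c i).1 ≤ B
    · have hx' := hdec.1 hx
      rw [if_pos hx, if_pos hx'] at hval
      simp only [Fin.ext_iff, Fin.ofNat] at hval
      rw [Nat.mod_eq_of_lt (by omega), Nat.mod_eq_of_lt (by omega)] at hval
      omega
    · have hx' := fun h => hx (hdec.2 h)
      rw [if_neg hx, if_neg hx'] at hval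
      simp only [Fin.ext_iff, Fin.ofNat] at hval
      rw [Nat.mod_eq_of_lt (by omega), Nat.mod_eq_of_lt (by omega)] at hval
      omega
  have := hno i i' hii (by omega) hst hdom
  rw [this] at hrec
  exact lt_irrefl _ hrec

/-- A run leaving a large box contains a semipositive cycle inside the box. -/
theorem exists_semipos_cycle (hM : EffBdd V M) (htr : IsTrace V NN L st c) (h0 : c 0 = 0) {t : ℕ}
    (ht : t ≤ L) (hbig : growth n M ^ n < (c t).1 + 1) {N : ℕ} (hN : growth n M ^ n + M ≤ N) :
    ∃ T ≤ t, ∃ a : Vec2, a ≠ 0 ∧ 0 ≤ a ∧ Bdd N a ∧ Box N (st T) (c T) ∧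
      ∃ l l', l ≤ n * (N + 1) ^ 2 ∧ l' ≤ n * (N + 1) ^ 2 ∧
        Walk V NN l (st 0) 0 (st T) (c T) ∧ Walk V NN l' (st T) (c T) (st T) (c T + a) := by
  classical
  have hex : ∃ j, j ≤ t ∧ ∃ i < j, st i = st j ∧ c i ≤ c j ∧ c i ≠ c j := by
    by_contra! hcon
    have := bdd_of_no_increase hM htr h0 n t ht
      ((Finset.card_le_univ _).trans (by simp))
      (fun i j h1 h2 h3 h4 => hcon j h2 i h1 h3 h4) le_rfl
    omega
  obtain ⟨hT, s, hsT, hst, hle, hne⟩ := Nat.find_spec hex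
  set T := Nat.find hex with hTdef
  have hbound : ∀ i < T, (c i).1 + 1 ≤ growth n M ^ n ∧ (c i).2 + 1 ≤ growth n M ^ n := by
    intro i hi
    refine bdd_of_no_increase hM htr h0 n i (by omega)
      ((Finset.card_le_univ _).trans (by simp)) (fun i' j h1 h2 h3 h4 => ?_) le_rfl
    by_contra hcon
    exact Nat.find_min hex (m := j) (by omega) ⟨by omega, i', h1, h3, h4, hcon⟩
  have hN' : (growth n M : ℤ) ^ n + M ≤ N := by exact_mod_cast hN
  have hbox : ∀ i ≤ T, Box N (st i) (c i) := by
    intro i hi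
    have hp := htr.pos i (by omega)
    rcases hi.lt_or_eq with hi | rfl
    · have := hbound i hi
      exact ⟨⟨hp.1, by omega⟩, hp.2, by omega⟩
    · have h1 := hbound (T - 1) (by omega)
      have h2 := htr.bdd_step hM (i := T - 1) (by omega)
      rw [show T - 1 + 1 = T by omega] at h2
      have h3 := (le_abs_self _).trans h2.1
      have h4 := (le_abs_self _).trans h2.2
      simp only [Prod.fst_sub, Prod.snd_sub] at h3 h4
      exact ⟨⟨hp.1, by omega⟩, hp.2, by omega⟩
  have htr' : IsTrace V (Box N) T st c :=
    ⟨fun i hi => htr.step i (by omega), fun i hi => hbox i hi⟩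
  have hNN : ∀ (s : Fin n) x, Box N s x → NN s x := fun s x h => ⟨h.1.1, h.2.1⟩
  obtain ⟨l, hl, hw⟩ := (htr'.walk' (Nat.zero_le T) le_rfl).shorten_box
  obtain ⟨l', hl', hw'⟩ := (htr'.walk' hsT.le le_rfl).shorten_box
  have ha : 0 ≤ c T - c s := sub_nonneg.2 hle
  obtain ⟨⟨hs1, hs2⟩, hs3, hs4⟩ := hbox s hsT.le
  obtain ⟨⟨hT1, hT2⟩, hT3, hT4⟩ := hbox T le_rfl
  have ha' := Prod.le_def.1 ha
  simp only [Prod.fst_zero, Prod.snd_zero, Prod.fst_sub, Prod.snd_sub] at ha'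
  refine ⟨T, hT, c T - c s, sub_ne_zero.2 hne.symm, ha, ?_, hbox T le_rfl, l, l', hl, hl', ?_, ?_⟩
  · constructor <;> simp only [Prod.fst_sub, Prod.snd_sub] <;> rw [abs_le] <;> omega
  · rw [h0] at hw; exact hw.mono hNN
  · have := hw'.shift (P' := NN) (c T - c s) (fun s x hx => by
      have := hNN s x hx
      simp only [NN, Prod.fst_add, Prod.snd_add, Prod.fst_sub, Prod.snd_sub] at this ⊢
      omega)
    rwa [add_sub_cancel, hst] at this

end

section
variable {n : ℕ} {V : VASS n} {P : Fin n → Vec2 → Prop} {L : ℕ} {p q r : Fin n} {u w : Vec2}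
  {st : ℕ → Fin n} {c : ℕ → Vec2}

theorem Walk.iterate_of_nonneg {a : Vec2} (ha : 0 ≤ a) (h : Walk V NN L p u p (u + a)) (m : ℕ) :
    Walk V NN (m * L) p u p (u + m • a) := by
  have ha' := Prod.le_def.1 ha
  induction m with
  | zero => simpa using Walk.nil (V := V) h.source
  | succ m ih =>
    have := h.trans (ih.shift (P' := NN) a fun s x hx => by
      simp only [NN, Prod.fst_add, Prod.snd_add, Prod.fst_zero, Prod.snd_zero] at *
      omega)
    rw [show u + m • a + a = u + (m + 1) • a by rw [succ_nsmul]; abel] at this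
    rwa [show (m + 1) * L = L + m * L by ring]

/-- Iteration of a cycle that only keeps the first coordinate nonnegative. -/
theorem Walk.iterate_half {M : ℤ} (hM : EffBdd V M) (hM0 : 0 ≤ M) (hP : ∀ s x, P s x → 0 ≤ x.1)
    (h : Walk V P L p u p w) (hw : u.1 ≤ w.1) (m : ℕ) {d : Vec2} (hd : u.1 ≤ d.1)
    (h1 : L * M ≤ d.2) (h2 : L * M ≤ d.2 + m * (w - u).2) :
    Walk V NN (m * L) p d p (d + m • (w - u)) := by
  have hLM : 0 ≤ L * M := by positivity
  have hu := hP _ _ h.source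
  induction m generalizing d with
  | zero => simpa using Walk.nil (V := V) (P := NN) (p := p) (u := d) ⟨by linarith, by linarith⟩
  | succ m ih =>
    have hstep := h.shift_of_bdd (P' := NN) hM hM0 (d - u) (fun s x hx hb => by
      have h3 := hP s x hx
      have h4 := (abs_le.1 hb.2).1
      simp only [Prod.snd_sub] at h4
      simp only [NN, Prod.fst_add, Prod.snd_add, Prod.fst_sub, Prod.snd_sub]
      constructor <;> linarith)
    rw [add_sub_cancel, show w + (d - u) = d + (w - u) by abel] at hstep
    have hm : (0 : ℤ) ≤ m := by positivity
    push_cast at h2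
    have h5 := ih (d := d + (w - u)) ?_ ?_ ?_
    · have := hstep.trans h5
      rw [show d + (w - u) + m • (w - u) = d + (m + 1) • (w - u) by rw [succ_nsmul]; abel] at this
      rwa [show (m + 1) * L = L + m * L by ring]
    · simp only [Prod.fst_add, Prod.fst_sub]; linarith
    · simp only [Prod.snd_add]
      rcases le_or_gt 0 (w - u).2 with hw | hw <;> nlinarith
    · simp only [Prod.snd_add]; linarith

/-- From `(q, 0)` one reaches `p` with all vectors `e + k • b + m • a`, where `b` is positive and
`x` lies on the line through `e` with direction `a`. Moreover `x` lies in a narrow belt with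
direction `b`, up to the directions provided by `a`. -/
def Engine (V : VASS n) (q : Fin n) (B : ℤ) (p : Fin n) (x b a e : Vec2) : Prop :=
  (0 < b.1 ∧ 0 < b.2 ∧ Bdd B b) ∧ (0 ≤ a ∧ Bdd B a) ∧ (0 ≤ e ∧ Bdd B e) ∧
  (∃ j : ℤ, x = e + j • a) ∧
  (∀ k m : ℕ, ∃ l : ℕ, (l : ℤ) ≤ B * (1 + k + m) ∧ Walk V NN l q 0 p (e + k • b + m • a)) ∧
  ∀ σ : ℤ, σ = 1 ∨ σ = -1 → σ * det b x ≤ B ∨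
    (0 < σ * det b a ∧ ∀ z : Vec2, 0 ≤ z.1 → 0 ≤ z.2 → 0 ≤ σ * det z a)

/-- The vector addition system with exchanged coordinates. -/
def swapV (V : VASS n) : VASS n := V.image fun t => (t.1, t.2.1.swap, t.2.2)

theorem mem_swapV {v : Vec2} : (p, v, q) ∈ swapV V ↔ (p, v.swap, q) ∈ V := by
  rw [swapV, Finset.mem_image]
  constructor
  · rintro ⟨⟨a, b, d⟩, h, e⟩
    simp only [Prod.mk.injEq] at e
    obtain ⟨rfl, rfl, rfl⟩ := e
    simpa using h
  · exact fun h => ⟨_, h, by simp⟩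

theorem EffBdd.swapV {M : ℤ} (hM : EffBdd V M) : EffBdd (swapV V) M := by
  rintro ⟨q, v, p⟩ h
  exact And.symm (hM _ (mem_swapV.1 h))

theorem Walk.of_swapV (h : Walk (swapV V) NN L p u q w) : Walk V NN L p u.swap q w.swap :=
  h.map (AddEquiv.prodComm (M := ℤ) (N := ℤ)).toAddMonoidHom (P' := NN)
    (fun _ _ _ h => mem_swapV.1 h) (fun _ _ h => And.symm h)

theorem Walk.to_swapV (h : Walk V NN L p u q w) : Walk (swapV V) NN L p u.swap q w.swap :=
  h.map (AddEquiv.prodComm (M := ℤ) (N := ℤ)).toAddMonoidHom (P' := NN)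
    (fun _ _ _ h => mem_swapV.2 (by simpa using h)) (fun _ _ h => And.symm h)

theorem IsTrace.to_swapV (h : IsTrace V NN L st c) :
    IsTrace (swapV V) NN L st (fun i => (c i).swap) :=
  ⟨fun i hi => mem_swapV.2 (h.step i hi), fun i hi => And.symm (h.pos i hi)⟩

theorem det_swap (x y : Vec2) : det x.swap y.swap = -det x y := by
  simp only [det, Prod.fst_swap, Prod.snd_swap]; ring

theorem Engine.of_swapV {B : ℤ} {x b a e : Vec2} (h : Engine (swapV V) q B p x.swap b a e) :
    Engine V q B p x b.swap a.swap e.swap := by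
  obtain ⟨⟨hb1, hb2, hb⟩, ⟨ha, ha'⟩, ⟨he, he'⟩, ⟨j, hj⟩, hrun, hσ⟩ := h
  refine ⟨⟨hb2, hb1, hb.symm⟩, ⟨And.symm ha, ha'.symm⟩, ⟨And.symm he, he'.symm⟩,
    ⟨j, ?_⟩, fun k m => ?_, fun σ hs => ?_⟩
  · rw [← Prod.swap_swap x, hj]; rfl
  · obtain ⟨l, hl, hw⟩ := hrun k m
    exact ⟨l, hl, hw.of_swapV⟩
  · have := hσ (-σ) (by omega)
    rw [← Prod.swap_swap x, det_swap, det_swap]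
    refine this.imp (fun h => by linarith) fun ⟨h1, h2⟩ => ⟨by linarith, fun z hz1 hz2 => ?_⟩
    have := h2 z.swap hz2 hz1
    rw [← Prod.swap_swap z, det_swap]
    linarith

variable {M N : ℕ}

/-- A bound for the lengths of walks in a strip of bounded width, up to vertical cycles. -/
def stripLength (n M N : ℕ) : ℕ := n * ((N + (n + 1) * M + 1) * N)

/-- A bound for all quantities in an engine. -/
def engineBound (n M N : ℕ) : ℕ :=
  (2 * N * N + N + (N + (n + 1) * M)) + (stripLength n M N * M + (stripLength n M N * M + 1) * N) *
    (N + (n + 1) * M + 1) + 3 * (stripLength n M N * M) * (N + 1) +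
    (stripLength n M N + n * (N + 1) ^ 2) * (3 * (stripLength n M N * M) + 3)

theorem Walk.shorten_strip {X : ℕ} {h : ℕ} (hh : h ≠ 0)
    (hP : P = fun _ x => 0 ≤ x.1 ∧ x.1 ≤ (X : ℤ))
    (hw : Walk V P L p u q w) :
    ∃ L' w', ∃ j : ℤ, L' ≤ n * ((X + 1) * h) ∧ w' = w + j • (0, (h : ℤ)) ∧
      Walk V P L' p u q w' := by
  subst hP
  have : NeZero h := ⟨hh⟩
  let H : AddSubmonoid Vec2 :=
    { carrier := {v | v.1 = 0 ∧ (h : ℤ) ∣ v.2}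
      zero_mem' := by simp
      add_mem' := fun {a b} ha hb => ⟨by simp [ha.1, hb.1], dvd_add ha.2 hb.2⟩ }
  obtain ⟨L', w', h1, h2, h3⟩ := hw.shorten (ι := Fin (X + 1) × ZMod h) H
    (by rintro s x d hd hx; simpa [hd.1] using hx)
    (fun x => (Fin.ofNat (X + 1) x.1.toNat, (x.2 : ZMod h)))
    (by
      intro l s x y _ hl hk
      obtain ⟨hx1, hx2⟩ := hl.source
      obtain ⟨hy1, hy2⟩ := hl.target
      simp only [Prod.mk.injEq, Fin.ext_iff, Fin.ofNat] at hk
      rw [Nat.mod_eq_of_lt (by omega), Nat.mod_eq_of_lt (by omega)] at hk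
      refine ⟨by simp only [Prod.fst_sub]; omega, ?_⟩
      rw [Prod.snd_sub, ← ZMod.intCast_zmod_eq_zero_iff_dvd]
      simp [hk.2])
  obtain ⟨h4, j, h5⟩ := h2
  refine ⟨L', w', j, by simpa using h1, ?_, h3⟩
  simp only [Prod.fst_sub, Prod.snd_sub] at h4 h5
  ext
  · simp; linarith
  · simp; linarith

theorem length_aux {Q ℓ C k m : ℤ} (hQ : 0 ≤ Q) (hℓ : 0 ≤ ℓ) (hC : 0 ≤ C) (hk : 0 ≤ k)
    (hm : 0 ≤ m) : Q + (2 * C + k * (C + 1) + m) * Q + ℓ + k * ℓ ≤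
      ((ℓ + Q) * (3 * C + 3)) * (1 + k + m) := by
  have : 0 ≤ (ℓ + Q) * (3 * C + 3) * (1 + k + m) -
      (Q + (2 * C + k * (C + 1) + m) * Q + ℓ + k * ℓ) := by
    ring_nf; positivity
  linarith

set_option maxHeartbeats 1000000 in
theorem exists_engine_of_vertical (hM : EffBdd V M) (htr : IsTrace V NN L st c) {t T : ℕ}
    (hT : T ≤ t) (ht : t ≤ L) (hbig : N + n * M < (c t).1) (hbox : Box N (st T) (c T)) {h : ℕ}
    (hh : h ≠ 0) (hhN : h ≤ N) {l l' : ℕ} (hl : l ≤ n * (N + 1) ^ 2) (hl' : l' ≤ n * (N + 1) ^ 2)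
    (hw : Walk V NN l q 0 (st T) (c T))
    (hw' : Walk V NN l' (st T) (c T) (st T) (c T + (0, (h : ℤ)))) :
    ∃ s, s ≤ t ∧ ∃ b a e, Engine V q (engineBound n M N) (st s) (c s) b a e := by
  obtain ⟨i, i', hi, hii, hi', hst, -, hlt, hX⟩ := exists_record_pair (fun i => (c i).1) st
    (a := N) (M := M) (by positivity) hT hbox.1.2 (fun i _ hi => by
      have h3 := (le_abs_self _).trans (htr.bdd_step hM (i := i) (by omega)).1
      simp only [Prod.fst_sub] at h3
      omega) (by simpa using hbig)
  refine ⟨i, by omega, ?_⟩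
  set X := N + (n + 1) * M with hXdef
  set ℓ := stripLength n M N with hℓ
  set C := ℓ * M with hC
  set P : Fin n → Vec2 → Prop := fun _ x => 0 ≤ x.1 ∧ x.1 ≤ X with hP
  have htr' : ∀ j k, T ≤ j → j ≤ k → k ≤ i' → Walk V P (k - j) (st j) (c j) (st k) (c k) := by
    intro j k hj hjk hk
    have h1 : IsTrace V P (i' - j) (fun x => st (j + x)) (fun x => c (j + x)) :=
      ⟨fun x hx => htr.step (j + x) (by omega), fun x hx =>
        ⟨(htr.pos (j + x) (by omega)).1, by
          have := hX (j + x) (by omega) (by omega)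
          simp only [Fintype.card_fin] at this
          push_cast [hXdef]; exact this⟩⟩
    simpa [show j + (k - j) = k by omega] using h1.walk' (Nat.zero_le (k - j)) (by omega)
  have hℓ' : n * ((X + 1) * h) ≤ ℓ := by
    simp only [hℓ, stripLength, ← hXdef]; gcongr
  have hPle : ∀ s x, P s x → 0 ≤ x.1 := fun s x hx => hx.1
  obtain ⟨l₁, w, j, hl₁, hwj, hmid⟩ := (htr' T i le_rfl hi (by omega)).shorten_strip hh hP
  obtain ⟨l₂, w₂, j₂, hl₂, hwj₂, hcyc⟩ := (htr' i i' hi hii.le le_rfl).shorten_strip hh hP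
  have hl₁C : (l₁ : ℤ) * M ≤ C := by
    have : l₁ * M ≤ ℓ * M := Nat.mul_le_mul_right _ (hl₁.trans hℓ')
    exact_mod_cast this
  have hl₂C : (l₂ : ℤ) * M ≤ C := by
    have : l₂ * M ≤ ℓ * M := Nat.mul_le_mul_right _ (hl₂.trans hℓ')
    exact_mod_cast this
  rw [← hst] at hcyc
  have hmidb := (hmid.bdd hM).mono hl₁C
  have hcycb := (hcyc.bdd hM).mono hl₂C
  set g := w₂ - c i with hg
  have hg1 : 0 < g.1 := by
    simp only [hg, hwj₂]; simp; linarith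
  have hci := hmid.target
  have hwi : w.1 = (c i).1 := by rw [hwj]; simp
  have hcpos := hcyc.source
  have hmid2 := abs_le.1 hmidb.2
  have hg2 := abs_le.1 hcycb.2
  simp only [Prod.snd_sub] at hmid2
  obtain ⟨⟨hT1, hT2⟩, hT3, hT4⟩ := hbox
  have hh1 : (1 : ℤ) ≤ h := by omega
  have hhN' : (h : ℤ) ≤ N := by exact_mod_cast hhN
  have hC0 : (0 : ℤ) ≤ C := by positivity
  have hCh : (C : ℤ) ≤ C * h := le_mul_of_one_le_right hC0 hh1
  have hChN : (C : ℤ) * h ≤ C * N := by gcongr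
  have hg1X : g.1 ≤ X := by
    have := hcyc.target.2
    simp only [hg, Prod.fst_sub]
    linarith [hcpos.1]
  have hKb : (engineBound n M N : ℤ) = (2 * N * N + N + X) + (C + (C + 1) * N) * (X + 1) +
      3 * C * (N + 1) + (ℓ + n * (N + 1) ^ 2) * (3 * C + 3) := by
    simp only [engineBound, ← hXdef, ← hℓ, ← hC]; push_cast; ring
  have hr1 : (0 : ℤ) ≤ (C + (C + 1) * N) * X := by positivity
  have hr2 : (0 : ℤ) ≤ (ℓ + n * (N + 1) ^ 2) * (3 * C + 3) := by positivity
  have hr3 : (0 : ℤ) ≤ 2 * N * N := by positivity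
  have hr4 : (0 : ℤ) ≤ C * N := by positivity
  have hX0 : (0 : ℤ) ≤ X := by positivity
  refine ⟨(g.1, g.2 + (C + 1) * h), (0, h), w + (2 * C) • (0, (h : ℤ)),
    ⟨hg1, ?_, ?_, ?_⟩, ⟨⟨le_rfl, by simp⟩, ?_, ?_⟩, ⟨⟨?_, ?_⟩, ?_, ?_⟩, ⟨-j - 2 * C, ?_⟩, ?_, ?_⟩
  · simp only; linarith
  · simp only; rw [abs_le]; constructor <;> linarith
  · simp only; rw [abs_le]; constructor <;> linarith
  · simp
  · simp only; rw [abs_le]; constructor <;> linarith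
  · simpa using hci.1
  · simp; linarith
  · simp only [Prod.fst_add, Prod.smul_fst, smul_zero, add_zero]
    rw [abs_le]; constructor <;> linarith [hci.1, hci.2]
  · simp only [Prod.snd_add, Prod.smul_snd]; simp only [nsmul_eq_mul]
    push_cast
    rw [abs_le]; constructor <;> linarith
  · rw [hwj]
    ext
    · simp
    · simp; ring
  · intro k m
    refine ⟨l + (2 * C + k * (C + 1) + m) * l' + l₁ + k * l₂, ?_, ?_⟩
    · have e1 : (l : ℤ) ≤ n * (N + 1) ^ 2 := by exact_mod_cast hl
      have e2 : (l' : ℤ) ≤ n * (N + 1) ^ 2 := by exact_mod_cast hl'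
      have e3 : (l₁ : ℤ) ≤ ℓ := by exact_mod_cast hl₁.trans hℓ'
      have e4 : (l₂ : ℤ) ≤ ℓ := by exact_mod_cast hl₂.trans hℓ'
      set Q : ℤ := n * (N + 1) ^ 2 with hQ
      have hQ0 : 0 ≤ Q := by positivity
      have hk0 : (0 : ℤ) ≤ k := by positivity
      have hm0 : (0 : ℤ) ≤ m := by positivity
      have hℓ0 : (0 : ℤ) ≤ ℓ := by positivity
      calc ((l + (2 * C + k * (C + 1) + m) * l' + l₁ + k * l₂ : ℕ) : ℤ)
          = l + (2 * C + k * (C + 1) + m) * l' + l₁ + k * l₂ := by push_cast; ring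
        _ ≤ Q + (2 * C + k * (C + 1) + m) * Q + ℓ + k * ℓ := by gcongr
        _ ≤ ((ℓ + Q) * (3 * C + 3)) * (1 + k + m) :=
          length_aux hQ0 hℓ0 hC0 hk0 hm0
        _ ≤ engineBound n M N * (1 + k + m) := by
          refine mul_le_mul_of_nonneg_right ?_ (by linarith)
          rw [hKb]; linarith
    · have ha : (0 : Vec2) ≤ (0, (h : ℤ)) := ⟨le_rfl, by simp⟩
      set R := 2 * C + k * (C + 1) + m with hR
      have hk0 : (0 : ℤ) ≤ k := by positivity
      have hm0 : (0 : ℤ) ≤ m := by positivity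
      have hkC : (0 : ℤ) ≤ k * C := by positivity
      have hkh : (0 : ℤ) ≤ k * (C + 1) * (h - 1) := mul_nonneg (by positivity) (by linarith)
      have hmh : (0 : ℤ) ≤ m * h := by positivity
      have hkg : 0 ≤ (k : ℤ) * (C + g.2) := mul_nonneg hk0 (by linarith)
      have hRh : 2 * (C : ℤ) + k * (C + 1) ≤ R * h := by
        simp only [hR]; push_cast; nlinarith
      have s1 := hw'.iterate_of_nonneg ha R
      have s2 := hmid.shift_of_bdd (P' := NN) hM (by positivity) (R • (0, (h : ℤ)))
        (fun s x hx hb => by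
          have h4 := (abs_le.1 hb.2).1
          simp only [Prod.snd_sub] at h4
          refine ⟨by simpa using hx.1, ?_⟩
          simp only [Prod.snd_add, Prod.smul_snd]; simp only [nsmul_eq_mul]
          linarith)
      have s3 := hcyc.iterate_half hM (by positivity) hPle (by rw [← sub_nonneg]; exact hg1.le) k
        (d := w + R • (0, (h : ℤ))) (by simp [hwi])
        (by simp only [Prod.snd_add, Prod.smul_snd]; simp only [nsmul_eq_mul]; linarith)
        (by simp only [Prod.snd_add, Prod.smul_snd]; simp only [nsmul_eq_mul]; rw [← hg]; linarith)
      have := ((hw.trans s1).trans s2).trans s3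
      convert this using 1
      rw [← hg]
      ext
      · simp
      · simp [hR]; ring
  · rintro σ (rfl | rfl)
    · refine Or.inr ⟨?_, fun z hz1 _ => ?_⟩
      · simp only [det]
        have : 0 < g.1 * (h : ℤ) := by positivity
        linarith
      · simp only [det]
        have : 0 ≤ z.1 * (h : ℤ) := by positivity
        linarith
    · left
      have hb2 : g.2 + (C + 1) * h ≤ C + (C + 1) * N := by nlinarith
      have e1 : (g.2 + (C + 1) * h) * (c i).1 ≤ (C + (C + 1) * N) * X :=
        mul_le_mul hb2 hcpos.2 hcpos.1 (by positivity)
      have e2 : 0 ≤ g.1 * (c i).2 := mul_nonneg hg1.le (htr.pos i (by omega)).2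
      simp only [det]
      linarith

/-- Every run reaching a vector with two large coordinates passes through an engine. -/
theorem exists_engine (hM : EffBdd V M) (htr : IsTrace V NN L st c) (h0 : c 0 = 0) {t : ℕ}
    (ht : t ≤ L) (hN : growth n M ^ n + M ≤ N) (hbig1 : N + n * M < (c t).1)
    (hbig2 : N + n * M < (c t).2) :
    ∃ T, T ≤ t ∧ ∃ b a e, Engine V (st 0) (engineBound n M N) (st T) (c T) b a e := by
  have hnM : (0 : ℤ) ≤ n * M := by positivity
  have hN' : (growth n M : ℤ) ^ n + M ≤ N := by exact_mod_cast hN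
  obtain ⟨T, hT, a, ha0, ha, hab, hbox, l, l', hl, hl', hw, hw'⟩ :=
    exists_semipos_cycle hM htr h0 ht (by omega) hN
  have ha' := Prod.le_def.1 ha
  simp only [Prod.fst_zero, Prod.snd_zero] at ha'
  have ha1 := (le_abs_self _).trans hab.1
  have ha2 := (le_abs_self _).trans hab.2
  rcases ha'.1.eq_or_lt with h1 | h1
  · have h2 : a.2 ≠ 0 := fun h => ha0 (Prod.ext h1.symm h)
    refine exists_engine_of_vertical (h := a.2.toNat) hM htr hT ht hbig1 hbox (by omega) (by omega)
      hl hl' hw ?_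
    convert hw' using 2
    exact Prod.ext h1 (by simp [ha'.2])
  rcases ha'.2.eq_or_lt with h2 | h2
  · obtain ⟨s, hs, b, a', e, heng⟩ := exists_engine_of_vertical (h := a.1.toNat) hM.swapV
      htr.to_swapV hT ht hbig2 hbox.symm (by omega) (by omega) hl hl' (by simpa using hw.to_swapV)
      (by
        convert hw'.to_swapV
        simp only [Int.toNat_of_nonneg ha'.1]
        ext <;> simp [← h2])
    exact ⟨s, hs, _, _, _, heng.of_swapV⟩
  · obtain ⟨⟨hT1, hT2⟩, hT3, hT4⟩ := hbox
    have hKb : (2 * N * N + N : ℤ) + (n * (N + 1) ^ 2) ≤ engineBound n M N := by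
      simp only [engineBound]
      push_cast
      have : (0 : ℤ) ≤ (2 * N * N + N + (N + (n + 1) * M)) + (stripLength n M N * M +
        (stripLength n M N * M + 1) * N) * (N + (n + 1) * M + 1) +
        3 * (stripLength n M N * M) * (N + 1) + (stripLength n M N + n * (N + 1) ^ 2) *
        (3 * (stripLength n M N * M) + 3) - (2 * N * N + N + n * (N + 1) ^ 2) := by
        ring_nf; positivity
      linarith
    have hQ0 : (0 : ℤ) ≤ n * (N + 1) ^ 2 := by positivity
    have hN0 : (0 : ℤ) ≤ N * N := by positivity
    refine ⟨T, hT, a, 0, c T, ⟨h1, h2, hab.mono (by linarith)⟩, ⟨le_rfl, bdd_zero (by positivity)⟩,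
      ⟨⟨hT1, hT3⟩, ?_, ?_⟩, ⟨0, by simp⟩, fun k m => ⟨l + k * l', ?_, ?_⟩, fun σ hσ => Or.inl ?_⟩
    · rw [abs_le]; constructor <;> linarith
    · rw [abs_le]; constructor <;> linarith
    · have e1 : (l : ℤ) ≤ n * (N + 1) ^ 2 := by exact_mod_cast hl
      have e2 : (l' : ℤ) ≤ n * (N + 1) ^ 2 := by exact_mod_cast hl'
      calc ((l + k * l' : ℕ) : ℤ) = l + k * l' := by push_cast; ring
        _ ≤ n * (N + 1) ^ 2 + k * (n * (N + 1) ^ 2) := by gcongr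
        _ ≤ (n * (N + 1) ^ 2) * (1 + k + m) := by
          have : (0 : ℤ) ≤ (n * (N + 1) ^ 2) * m := by positivity
          linarith
        _ ≤ engineBound n M N * (1 + k + m) := by
          gcongr; linarith
    · simpa using hw.trans (hw'.iterate_of_nonneg ha k)
    · have hd := abs_det_le hab (v := c T) (C := N) ⟨abs_le.2 ⟨by linarith, hT2⟩,
        abs_le.2 ⟨by linarith, hT4⟩⟩
      have hd' : σ * det a (c T) ≤ |det a (c T)| := by
        rcases hσ with rfl | rfl
        · simpa using le_abs_self _
        · simpa using neg_le_abs _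
      linarith

end

section
variable {n : ℕ} {V : VASS n} {P : Fin n → Vec2 → Prop} {L : ℕ} {p q r : Fin n} {u w b : Vec2}
  {st : ℕ → Fin n} {c : ℕ → Vec2} {M B : ℕ}

/-- The vector `w` is the effect of a short cycle at the state `s`. -/
def Cyc (V : VASS n) (s : Fin n) (w : Vec2) : Prop := ∃ l ≤ n, Walk V Free l s 0 s w

theorem Cyc.bdd {s : Fin n} (hM : EffBdd V M) (h : Cyc V s w) : Bdd (n * M) w := by
  obtain ⟨l, hl, hw⟩ := h
  have := hw.bdd hM
  rw [sub_zero] at this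
  exact this.mono (by gcongr)

theorem Walk.free (h : Walk V P L p u q w) : Walk V Free L p 0 q (w - u) := by
  have := h.shift (P' := Free) (-u) (fun _ _ _ => trivial)
  rwa [add_neg_cancel, ← sub_eq_add_neg] at this

theorem det_sub (g x y : Vec2) : det g (x - y) = det g x - det g y := by
  simp only [det, Prod.fst_sub, Prod.snd_sub]; ring

theorem det_add (g x y : Vec2) : det g (x + y) = det g x + det g y := by
  simp only [det, Prod.fst_add, Prod.snd_add]; ring

/-- If no short cycle along a trace increases `det g`, then `det g` hardly increases. -/
theorem det_le_of_cycles (hM : EffBdd V M) (htr : IsTrace V P L st c) {i j : ℕ} (hij : i ≤ j)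
    (hj : j ≤ L) {g : Vec2} {G : ℤ} (hg : Bdd G g)
    (hc : ∀ k, i ≤ k → k ≤ j → ∀ u, Cyc V (st k) u → det g u ≤ 0) :
    det g (c j) ≤ det g (c i) + 2 * G * (n * M) := by
  let H : AddSubmonoid Vec2 :=
    { carrier := {v | 0 ≤ det g v}
      zero_mem' := by simp [det]
      add_mem' := fun {x y} hx hy => by
        have hx' : 0 ≤ det g x := hx
        have hy' : 0 ≤ det g y := hy
        change 0 ≤ det g (x + y)
        rw [det_add]; linarith }
  have htr' : IsTrace V (fun s _ => ∃ k, i ≤ k ∧ k ≤ j ∧ st k = s) (j - i)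
      (fun k => st (i + k)) (fun k => c (i + k)) :=
    ⟨fun k hk => htr.step (i + k) (by omega), fun k hk => ⟨i + k, by omega, by omega, rfl⟩⟩
  have hw := htr'.walk' (Nat.zero_le (j - i)) le_rfl
  simp only [add_zero, Nat.add_sub_cancel' hij] at hw
  obtain ⟨L', w', h1, h2, h3⟩ := hw.shorten (ι := Unit) H (fun _ _ _ _ h => h) (fun _ => ())
    (by
      intro l s x y hl hw _
      obtain ⟨k, hk1, hk2, rfl⟩ := hw.source
      have := hc k hk1 hk2 _ ⟨l, by simpa using hl, hw.free⟩
      change 0 ≤ det g (x - y)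
      rw [det_sub] at this ⊢
      linarith)
  have hb := (h3.bdd hM).mono (C := n * M) (by gcongr; simpa using h1)
  have h4 := (le_abs_self _).trans (abs_det_le hg hb)
  have h5 : 0 ≤ det g (w' - c j) := h2
  rw [det_sub] at h4 h5
  linarith

theorem exists_ccw_maximal (hb : 0 < b.1) {S : Set Vec2} {B : ℤ} (hS : ∀ w ∈ S, Bdd B w)
    (hne : S.Nonempty) (hpos : ∀ w ∈ S, 0 < det b w) : ∃ h ∈ S, ∀ w ∈ S, det h w ≤ 0 := by
  have hfin : S.Finite := by
    refine ((Set.finite_Icc (-B) B).prod (Set.finite_Icc (-B) B)).subset fun w hw => ?_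
    have := hS w hw
    exact ⟨abs_le.1 this.1, abs_le.1 this.2⟩
  obtain ⟨h, hh, hmin⟩ := Set.exists_min_image S (fun w => (w.1 : ℚ) / det b w) hfin hne
  refine ⟨h, hh, fun w hw => ?_⟩
  have h1 := hmin w hw
  have h2 : (0 : ℚ) < det b h := by exact_mod_cast hpos h hh
  have h3 : (0 : ℚ) < det b w := by exact_mod_cast hpos w hw
  rw [div_le_div_iff₀ h2 h3] at h1
  have h4 : h.1 * det b w ≤ w.1 * det b h := by exact_mod_cast h1
  have h5 : h.1 * det b w - w.1 * det b h = b.1 * det h w := by simp only [det]; ring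
  by_contra! hcon
  nlinarith [mul_pos hb hcon]

/-- A bound on the angular distance which can be covered by short cycles. -/
def seqBound (n M B : ℕ) : ℕ :=
  2 * B * (n * M) * (n * M * (B + 2 * B * M + 2 * B * (n * M)) +
    4 * (n * M) * (n * M) * n)

/-- A bound for `det h z`, in terms of `det b z`. -/
theorem det_le_of_det_le {h z : Vec2} {G Y : ℤ} (hb : 0 < b.1) (hG : 0 ≤ G) (hhG : h.1 ≤ G)
    (hbh : 0 < det b h) (hz : 0 ≤ z.1) (hY0 : 0 ≤ det b z) (hY : det b z ≤ Y) :
    det h z ≤ G * Y := by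
  have e := (cramer b h z).1
  have h1 : h.1 * det b z ≤ G * Y := by
    calc h.1 * det b z ≤ G * det b z := by gcongr
      _ ≤ G * Y := by gcongr
  have h2 : 0 ≤ z.1 * det b h := by positivity
  have h3 : 0 ≤ G * Y := mul_nonneg hG (by linarith)
  by_contra! hcon
  nlinarith

theorem det_exchange (b h w z : Vec2) :
    det b h * det w z = -det h w * det b z + det b w * det h z := by
  simp only [det]; ring

set_option maxHeartbeats 1000000 in
theorem exists_cycle_ccw (hM : EffBdd V M) (htr : IsTrace V NN L st c) {s t : ℕ}
    (hs : s ≤ t) (ht : t ≤ L) (hb1 : 0 < b.1) (hb2 : 0 < b.2) (hb : Bdd B b) {Y : ℤ}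
    (hY : det b (c s) ≤ Y) (hpos : ∀ k, s ≤ k → k ≤ t → 0 < det b (c k))
    (hno : ∀ i j w u, s ≤ i → i ≤ j → j ≤ t → Cyc V (st i) w → Cyc V (st j) u → 0 < det b w →
      0 ≤ w → 0 < det w u → 0 < det b u) {τ : ℕ} (hτ : s ≤ τ) (hτt : τ ≤ t)
    (hne : ∃ i w, s ≤ i ∧ i ≤ τ ∧ Cyc V (st i) w ∧ 0 < det b w) :
    ∃ i w, s ≤ i ∧ i ≤ τ ∧ Cyc V (st i) w ∧ 0 < det b w ∧ det w (c τ) ≤ det b w *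
      (n * M * (Y + 2 * B * (n * M)) +
        4 * (n * M) * (n * M) * ((Finset.Icc s τ).image st).card) := by
  classical
  induction τ using Nat.strong_induction_on with
  | _ τ ih =>
  set G : ℤ := n * M with hG
  set R : ℤ := G * (Y + 2 * B * G) with hR
  have hY0 : 0 < Y := (hpos s le_rfl hs).trans_le hY
  have hG0 : 0 ≤ G := by positivity
  have hn : 0 < n := Fin.pos (st 0)
  have hMG : (M : ℤ) ≤ G := by
    have : (1 : ℤ) ≤ n := by exact_mod_cast hn
    rw [hG]; nlinarith
  have hR0 : 0 ≤ R := by positivity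
  obtain ⟨h, ⟨i₀, hi₀⟩, hmax⟩ := exists_ccw_maximal hb1
    (S := {w | ∃ i, s ≤ i ∧ i ≤ τ ∧ Cyc V (st i) w ∧ 0 < det b w}) (B := G)
    (by rintro w ⟨i, -, -, h, -⟩; exact h.bdd hM)
    (by obtain ⟨i, w, h⟩ := hne; exact ⟨w, i, h⟩)
    (by rintro w ⟨i, -, -, -, h⟩; exact h)
  have hex : ∃ i, s ≤ i ∧ i ≤ τ ∧ Cyc V (st i) h ∧ 0 < det b h := ⟨i₀, hi₀⟩
  obtain ⟨hi1, hi2, hcyc, hbh⟩ := Nat.find_spec hex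
  have hmin := fun m => Nat.find_min hex (m := m)
  set i := Nat.find hex
  refine ⟨i, h, hi1, hi2, hcyc, hbh, ?_⟩
  have hhb := hcyc.bdd hM
  have hcard : 1 ≤ ((Finset.Icc s τ).image st).card := Finset.card_pos.2
    ⟨st s, Finset.mem_image_of_mem _ (Finset.mem_Icc.2 ⟨le_rfl, hτ⟩)⟩
  have hcard' : (1 : ℤ) ≤ ((Finset.Icc s τ).image st).card := by exact_mod_cast hcard
  have hGG : 0 ≤ G * G := by positivity
  have hGGd : G * G ≤ det b h * (G * G) := le_mul_of_one_le_left hGG hbh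
  have hRd : R ≤ det b h * R := le_mul_of_one_le_left hR0 hbh
  have hcτ := htr.pos τ (by omega)
  have hdτ := hpos τ hτ hτt
  by_cases hh : 0 ≤ h.1 ∧ 0 ≤ h.2
  swap
  · have hle : det h (c τ) ≤ 0 := by
      obtain ⟨e1, e2⟩ := cramer b h (c τ)
      have h1 : 0 ≤ (c τ).1 * det b h := mul_nonneg hcτ.1 hbh.le
      have h2 : 0 ≤ (c τ).2 * det b h := mul_nonneg hcτ.2 hbh.le
      by_contra! hcon
      rw [not_and_or] at hh
      rcases hh with hh | hh <;> nlinarith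
    refine hle.trans ?_
    positivity
  have hstep1 : det h (c τ) ≤ det h (c i) + 2 * (G * G) := by
    have := det_le_of_cycles hM htr hi2 (by omega) hhb (fun k hk1 hk2 u hu => by
      by_contra! hcon
      have := hno i k h u hi1 hk1 (by omega) hcyc hu hbh hh hcon
      have := hmax u ⟨k, by omega, hk2, hu, this⟩
      omega)
    linarith
  rcases hi1.eq_or_lt with heq | hlt
  · have h1 := det_le_of_det_le hb1 hG0 ((le_abs_self _).trans hhb.1) hbh
      (htr.pos s (by omega)).1 (hpos s le_rfl hs).le hY
    rw [← heq] at hstep1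
    have h2 : 0 ≤ G * (2 * B * G) := by positivity
    calc det h (c τ) ≤ R + 2 * (G * G) := by rw [hR]; linarith
      _ ≤ det b h * R + det b h * (4 * G * G) := by linarith
      _ ≤ det b h * R + det b h * (4 * G * G * ((Finset.Icc s τ).image st).card) := by
        have : 4 * G * G ≤ 4 * G * G * ((Finset.Icc s τ).image st).card :=
          le_mul_of_one_le_right (by positivity) hcard'
        gcongr
      _ = _ := by ring
  have hstep2 : det h (c i) ≤ det h (c (i - 1)) + 2 * (G * G) := by
    have h1 := htr.bdd_step hM (i := i - 1) (by omega)
    rw [show i - 1 + 1 = i by omega] at h1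
    have h2 := (le_abs_self _).trans (abs_det_le hhb h1)
    rw [det_sub] at h2
    have : 2 * G * M ≤ 2 * G * G := by gcongr
    linarith
  have hci := htr.pos (i - 1) (by omega)
  have hdi := hpos (i - 1) (by omega) (by omega)
  have hcardlt : ((Finset.Icc s (i - 1)).image st).card + 1 ≤
      ((Finset.Icc s τ).image st).card := by
    refine Nat.succ_le_of_lt (Finset.card_lt_card ?_)
    rw [Finset.ssubset_iff_of_subset
      (Finset.image_subset_image (Finset.Icc_subset_Icc le_rfl (by omega)))]
    refine ⟨st i, Finset.mem_image_of_mem _ (Finset.mem_Icc.2 ⟨hi1, hi2⟩), fun hmem => ?_⟩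
    obtain ⟨k, hk, hki⟩ := Finset.mem_image.1 hmem
    rw [Finset.mem_Icc] at hk
    exact hmin k (by omega) ⟨hk.1, by omega, by rw [hki]; exact hcyc, hbh⟩
  have hcardlt' : (((Finset.Icc s (i - 1)).image st).card : ℤ) + 1 ≤
      ((Finset.Icc s τ).image st).card := by exact_mod_cast hcardlt
  suffices hprev : det h (c (i - 1)) ≤ det b h *
      (R + 4 * G * G * ((Finset.Icc s (i - 1)).image st).card) by
    have h1 : det b h * (4 * G * G * (((Finset.Icc s (i - 1)).image st).card + 1)) ≤
        det b h * (4 * G * G * ((Finset.Icc s τ).image st).card) := by gcongr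
    linarith
  by_cases hW : ∃ j w, s ≤ j ∧ j ≤ i - 1 ∧ Cyc V (st j) w ∧ 0 < det b w
  · obtain ⟨j, w, hj1, hj2, hw, hbw, hle⟩ := ih (i - 1) (by omega) (by omega) (by omega) hW
    have h1 := hmax w ⟨j, hj1, by omega, hw, hbw⟩
    have e : det b h * det w (c (i - 1)) = -det h w * det b (c (i - 1)) +
        det b w * det h (c (i - 1)) := det_exchange _ _ _ _
    have h2 : 0 ≤ -det h w * det b (c (i - 1)) := mul_nonneg (by linarith) hdi.le
    have h3 := mul_le_mul_of_nonneg_left hle hbh.le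
    refine le_of_mul_le_mul_left ?_ hbw
    linarith
  · push Not at hW
    have h1 := det_le_of_cycles hM htr (i := s) (j := i - 1) (by omega) (by omega) hb
      (fun k hk1 hk2 u hu => hW k u hk1 hk2 hu)
    have h2 := det_le_of_det_le hb1 hG0 ((le_abs_self _).trans hhb.1) hbh hci.1 hdi.le
      (Y := Y + 2 * B * G) (by linarith)
    have h3 : 0 ≤ det b h * (4 * G * G * ((Finset.Icc s (i - 1)).image st).card) := by positivity
    linarith

/-- A run moving far away counterclockwise from the direction `b` either visits a cycle pointing
at least as far, or two consecutive cycles which together with `b` span the plane. -/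
theorem exists_cycle_sequence (hM : EffBdd V M) (htr : IsTrace V NN L st c) {T t : ℕ}
    (hT : T ≤ t) (ht : t ≤ L) (hb1 : 0 < b.1) (hb2 : 0 < b.2) (hb : Bdd B b)
    (hx : det b (c T) ≤ B) (hbig : B + 2 * B * M + 2 * B * (n * M) < det b (c t)) :
    (∃ i w, T ≤ i ∧ i ≤ t ∧ Cyc V (st i) w ∧ 0 < det b w ∧ det w (c t) ≤ seqBound n M B) ∨
    ∃ i j w u, T ≤ i ∧ i ≤ j ∧ j ≤ t ∧ Cyc V (st i) w ∧ Cyc V (st j) u ∧ 0 < det b w ∧ 0 ≤ w ∧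
      0 < det w u ∧ det b u ≤ 0 := by
  classical
  rw [or_iff_not_imp_right]
  intro hno
  push Not at hno
  have hB0 : (0 : ℤ) ≤ B := by positivity
  have hBM : (0 : ℤ) ≤ 2 * B * M := by positivity
  have hBG : (0 : ℤ) ≤ 2 * B * (n * M) := by positivity
  obtain ⟨T', h1, h2, h3, h4⟩ := exists_last_le (fun i => det b (c i)) B hT hx (by linarith)
  have hY : det b (c (T' + 1)) ≤ B + 2 * B * M := by
    have h5 := (le_abs_self _).trans (abs_det_le hb (htr.bdd_step hM (i := T') (by omega)))
    rw [det_sub] at h5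
    linarith
  by_cases hW : ∃ i w, T' + 1 ≤ i ∧ i ≤ t ∧ Cyc V (st i) w ∧ 0 < det b w
  · obtain ⟨i, w, hi1, hi2, hw, hbw, hle⟩ := exists_cycle_ccw hM htr (s := T' + 1) (t := t)
      (by omega) ht hb1 hb2 hb hY (fun k hk1 hk2 => hB0.trans_lt (h4 k (by omega) hk2))
      (fun i j w u hi hij hj hw hu => hno i j w u (by omega) hij hj hw hu) (τ := t) (by omega)
      le_rfl hW
    refine ⟨i, w, by omega, hi2, hw, hbw, hle.trans ?_⟩
    have h5 := (le_abs_self _).trans (abs_det_le hb (hw.bdd hM))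
    have h6 : (((Finset.Icc (T' + 1) t).image st).card : ℤ) ≤ n := by
      exact_mod_cast (Finset.card_le_univ _).trans (by simp)
    simp only [seqBound]
    push_cast
    gcongr
  · push Not at hW
    have h5 := det_le_of_cycles hM htr (i := T' + 1) (j := t) (by omega) ht hb
      (fun k hk1 hk2 u hu => hW k u hk1 hk2 hu)
    linarith

end

section
variable {n : ℕ} {V : VASS n} {P : Fin n → Vec2 → Prop} {L : ℕ} {p q r : Fin n} {u w b a e c : Vec2}
  {M B : ℕ} {Q D : ℤ}

/-- Free walks can be shortened if only the effect modulo `D` matters. -/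
theorem Walk.shorten_mod {D : ℕ} (hD : 0 < D) (h : Walk V P L p u q w) :
    ∃ l s, l ≤ n * (D * D) ∧ Walk V Free l p 0 q s ∧ ∃ y : Vec2, s = w - u + (D : ℤ) • y := by
  have : NeZero D := ⟨hD.ne'⟩
  let H : AddSubmonoid Vec2 :=
    { carrier := {v | (D : ℤ) ∣ v.1 ∧ (D : ℤ) ∣ v.2}
      zero_mem' := by simp
      add_mem' := fun {a b} ha hb => ⟨dvd_add ha.1 hb.1, dvd_add ha.2 hb.2⟩ }
  obtain ⟨l, s, h1, h2, h3⟩ := h.free.shorten (ι := ZMod D × ZMod D) H (fun _ _ _ _ _ => trivial)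
    (fun x => ((x.1 : ZMod D), (x.2 : ZMod D)))
    (by
      intro l s x y _ _ hk
      simp only [Prod.mk.injEq] at hk
      constructor
      · rw [Prod.fst_sub, ← ZMod.intCast_zmod_eq_zero_iff_dvd]
        simp [hk.1]
      · rw [Prod.snd_sub, ← ZMod.intCast_zmod_eq_zero_iff_dvd]
        simp [hk.2])
  obtain ⟨⟨y1, hy1⟩, y2, hy2⟩ := h2
  refine ⟨l, s, by simpa using h1, h3, (y1, y2), ?_⟩
  ext
  · simp only [Prod.fst_add, Prod.fst_sub, Prod.smul_fst, smul_eq_mul] at hy1 ⊢; linarith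
  · simp only [Prod.snd_add, Prod.snd_sub, Prod.smul_snd, smul_eq_mul] at hy2 ⊢; linarith

/-- Along a skeleton of short walks, cycles can be inserted if the vectors are large. -/
theorem Walk.insert_cycles (hM : EffBdd V M) {p₀ p₁ p₂ p₃ : Fin n} {l₀ l₁ l₂ l₃ lw lu ℓ : ℕ}
    {v s₁ s₂ s₃ : Vec2} (h₀ : Walk V NN l₀ q 0 p₀ v) (h₁ : Walk V Free l₁ p₀ 0 p₁ s₁)
    (h₂ : Walk V Free l₂ p₁ 0 p₂ s₂) (h₃ : Walk V Free l₃ p₂ 0 p₃ s₃)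
    (hw : Walk V Free lw p₁ 0 p₁ w) (hu : Walk V Free lu p₂ 0 p₂ u) (hl₁ : l₁ ≤ ℓ) (hl₂ : l₂ ≤ ℓ)
    (hl₃ : l₃ ≤ ℓ) (hlw : lw ≤ ℓ) (hlu : lu ≤ ℓ) (m μ : ℕ)
    (hv1 : 2 * (ℓ * M) ≤ v.1) (hv2 : 2 * (ℓ * M) ≤ v.2)
    (hw1 : 2 * (ℓ * M) ≤ (v + s₁ + m • w).1) (hw2 : 2 * (ℓ * M) ≤ (v + s₁ + m • w).2)
    (hu1 : 2 * (ℓ * M) ≤ (v + s₁ + m • w + s₂ + μ • u).1)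
    (hu2 : 2 * (ℓ * M) ≤ (v + s₁ + m • w + s₂ + μ • u).2) :
    ∃ l, l ≤ l₀ + ℓ * (3 + m + μ) ∧
      Walk V NN l q 0 p₃ (v + s₁ + m • w + s₂ + μ • u + s₃) := by
  have hM0 : (0 : ℤ) ≤ M := by positivity
  have hlen : ∀ l, l ≤ ℓ → (l : ℤ) * M ≤ ℓ * M := fun l hl => by gcongr
  have hC0 : (0 : ℤ) ≤ ℓ * M := by positivity
  have hb : ∀ {l p q s}, l ≤ ℓ → Walk V Free l p 0 q s → -(ℓ * M : ℤ) ≤ s.1 ∧ -(ℓ * M : ℤ) ≤ s.2 :=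
    fun {l p q s} hl h => by
      have := (h.bdd hM).mono (hlen l hl)
      rw [sub_zero] at this
      exact ⟨(abs_le.1 this.1).1, (abs_le.1 this.2).1⟩
  have b₁ := hb hl₁ h₁
  have b₂ := hb hl₂ h₂
  have e₁ := hlen _ hl₁
  have e₂ := hlen _ hl₂
  have e₃ := hlen _ hl₃
  have ew := hlen _ hlw
  have eu := hlen _ hlu
  have r₁ := h₁.enable hM hM0 (d := v) (by linarith) (by linarith)
  rw [sub_zero] at r₁
  have rw' := hw.iterate hM hM0 m (d := v + s₁)
    (by simp only [Prod.fst_add]; linarith) (by simp only [Prod.snd_add]; linarith)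
    (by simp only [Prod.fst_add, Prod.smul_fst] at hw1 ⊢
        simp only [nsmul_eq_mul] at hw1; linarith)
    (by simp only [Prod.snd_add, Prod.smul_snd] at hw2 ⊢
        simp only [nsmul_eq_mul] at hw2; linarith)
  have r₂ := h₂.enable hM hM0 (d := v + s₁ + m • w) (by linarith) (by linarith)
  rw [sub_zero] at r₂
  have ru := hu.iterate hM hM0 μ (d := v + s₁ + m • w + s₂)
    (by rw [Prod.fst_add]; linarith) (by rw [Prod.snd_add]; linarith)
    (by have : (μ • u).1 = (μ : ℤ) * u.1 := by rw [Prod.smul_fst, nsmul_eq_mul]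
        rw [Prod.fst_add, this] at hu1; linarith)
    (by have : (μ • u).2 = (μ : ℤ) * u.2 := by rw [Prod.smul_snd, nsmul_eq_mul]
        rw [Prod.snd_add, this] at hu2; linarith)
  have r₃ := h₃.enable hM hM0 (d := v + s₁ + m • w + s₂ + μ • u) (by linarith) (by linarith)
  rw [sub_zero] at r₃
  refine ⟨_, ?_, ((((h₀.trans r₁).trans rw').trans r₂).trans ru).trans r₃⟩
  have i1 : m * lw ≤ m * ℓ := Nat.mul_le_mul_left _ hlw
  have i2 : μ * lu ≤ μ * ℓ := Nat.mul_le_mul_left _ hlu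
  nlinarith

/-- The vectors that are reached quickly by a suitable combination of `b`, `a`, `w` and `u`. -/
def Flow (V : VASS n) (q r : Fin n) (Q D : ℤ) (c b a w u : Vec2) : Prop :=
  ∃ e₀ : Vec2, Bdd Q e₀ ∧ (∃ y : Vec2, c = e₀ + D • y) ∧ ∀ (k m m' μ : ℕ) (z : Vec2),
    z = e₀ + k • b + m • a + m' • w + μ • u → 3 * Q ≤ k → (0 ≤ w ∨ μ = 0) →
    5 * Q ≤ z.1 → 5 * Q ≤ z.2 →
    ∃ l : ℕ, (l : ℤ) ≤ Q * (4 + Q + k + m + m' + μ) ∧ Walk V NN l q 0 r z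

/-- A bound for the moduli that occur. -/
def modBound (n M B : ℕ) : ℕ := 2 * (B + n * M) * (B + n * M)

/-- A bound for the lengths of walks up to congruence. -/
def skelLength (n M B : ℕ) : ℕ := n * (modBound n M B * modBound n M B) + n

/-- A bound for all basic quantities of a flow. -/
def flowBound (n M B : ℕ) : ℕ :=
  (B + n * M) + modBound n M B + skelLength n M B + modBound n M B * B + 3 * (skelLength n M B * M)

theorem exists_flow (hM : EffBdd V M) {p₀ p₁ p₂ p₃ : Fin n} {c₀ c₁ c₂ c₃ : Vec2}
    {l₁ l₂ l₃ : ℕ} (heng : Engine V q B p₀ c₀ b a e) (h₁ : Walk V P l₁ p₀ c₀ p₁ c₁)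
    (h₂ : Walk V P l₂ p₁ c₁ p₂ c₂) (h₃ : Walk V P l₃ p₂ c₂ p₃ c₃) (hw : Cyc V p₁ w)
    (hu : Cyc V p₂ u) (hD : 0 < D) (hDb : D ≤ modBound n M B) :
    Flow V q p₃ (flowBound n M B) D c₃ b a w u := by
  lift D to ℕ using hD.le
  have hD' : 0 < D := by exact_mod_cast hD
  have hDb' : D ≤ modBound n M B := by exact_mod_cast hDb
  set ℓ := skelLength n M B with hℓ
  set E := modBound n M B with hE
  obtain ⟨⟨hb1, hb2, hb⟩, ⟨ha, hab⟩, ⟨he, heb⟩, ⟨j, hj⟩, hpump, -⟩ := heng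
  have hℓ' : n * (D * D) ≤ ℓ := by
    simp only [hℓ, skelLength, ← hE]
    have : n * (D * D) ≤ n * (E * E) := by gcongr
    omega
  have hnℓ : n ≤ ℓ := by simp [hℓ, skelLength]
  obtain ⟨t₁, s₁, ht₁, hs₁, y₁, hy₁⟩ := h₁.shorten_mod hD'
  obtain ⟨t₂, s₂, ht₂, hs₂, y₂, hy₂⟩ := h₂.shorten_mod hD'
  obtain ⟨t₃, s₃, ht₃, hs₃, y₃, hy₃⟩ := h₃.shorten_mod hD'
  obtain ⟨lw, hlw, hw⟩ := hw
  obtain ⟨lu, hlu, hu⟩ := hu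
  set C : ℤ := ℓ * M with hC
  have hC0 : 0 ≤ C := by positivity
  have hbd : ∀ {l p q s}, l ≤ ℓ → Walk V Free l p 0 q s → Bdd C s := fun {l p q s} hl h => by
    have := (h.bdd hM).mono (C := C) (by rw [hC]; gcongr)
    rwa [sub_zero] at this
  have B₁ := hbd (ht₁.trans hℓ') hs₁
  have B₂ := hbd (ht₂.trans hℓ') hs₂
  have B₃ := hbd (ht₃.trans hℓ') hs₃
  set Q : ℤ := ((flowBound n M B : ℕ) : ℤ) with hQ
  have hQeq : Q = (B + n * M) + E + ℓ + E * B + 3 * C := by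
    simp only [hQ, flowBound, ← hE, ← hℓ, hC]; push_cast; ring
  have hB0 : (0 : ℤ) ≤ B := by positivity
  have hEB0 : (0 : ℤ) ≤ E * B := by positivity
  have hnM0 : (0 : ℤ) ≤ n * M := by positivity
  obtain ⟨m₀, hm₀⟩ : ∃ m₀ : ℕ, (m₀ : ℤ) = j % D :=
    ⟨(j % D).toNat, Int.toNat_of_nonneg (Int.emod_nonneg _ hD.ne')⟩
  have hm₀D : (m₀ : ℤ) ≤ E := by
    rw [hm₀]; exact (Int.emod_lt_of_pos _ hD).le.trans hDb
  obtain ⟨d, hd⟩ : ∃ d : ℤ, j = m₀ + D * d :=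
    ⟨j / D, by rw [hm₀]; exact (Int.emod_add_mul_ediv j D).symm⟩
  have ha' := Prod.le_def.1 ha
  have he' := Prod.le_def.1 he
  simp only [Prod.fst_zero, Prod.snd_zero] at ha' he'
  have hEa : Bdd (E * B) (m₀ • a) := by
    constructor
    · rw [Prod.smul_fst, nsmul_eq_mul, abs_mul, Nat.abs_cast]
      exact mul_le_mul hm₀D hab.1 (abs_nonneg _) (by positivity)
    · rw [Prod.smul_snd, nsmul_eq_mul, abs_mul, Nat.abs_cast]
      exact mul_le_mul hm₀D hab.2 (abs_nonneg _) (by positivity)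
  refine ⟨e + m₀ • a + s₁ + s₂ + s₃, ?_, ⟨d • a - y₁ - y₂ - y₃, ?_⟩, ?_⟩
  · exact ((((heb.add hEa).add B₁).add B₂).add B₃).mono (by rw [hQeq]; linarith)
  · rw [hy₁, hy₂, hy₃, hj, hd]
    ext
    · simp only [Prod.fst_add, Prod.fst_sub, Prod.smul_fst]
      simp only [smul_eq_mul, nsmul_eq_mul]
      ring
    · simp only [Prod.snd_add, Prod.snd_sub, Prod.smul_snd]
      simp only [smul_eq_mul, nsmul_eq_mul]
      ring
  intro k m m' μ z hz hk hcase hz1 hz2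
  obtain ⟨l₀, hl₀, hrun⟩ := hpump k (m₀ + m)
  set v := e + k • b + (m₀ + m) • a with hv
  have hvz : z = v + s₁ + m' • w + s₂ + μ • u + s₃ := by
    rw [hz, hv, add_nsmul]; abel
  have hvk : (k : ℤ) ≤ v.1 ∧ (k : ℤ) ≤ v.2 := by
    simp only [hv, Prod.fst_add, Prod.snd_add, Prod.smul_fst, Prod.smul_snd]
    simp only [nsmul_eq_mul]
    have hk0 : (0 : ℤ) ≤ k := by positivity
    have hm0 : (0 : ℤ) ≤ (m₀ + m : ℕ) := by positivity
    have i1 := mul_nonneg hm0 ha'.1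
    have i2 := mul_nonneg hm0 ha'.2
    have i3 := le_mul_of_one_le_right hk0 (show 1 ≤ b.1 from hb1)
    have i4 := le_mul_of_one_le_right hk0 (show 1 ≤ b.2 from hb2)
    constructor <;> linarith
  have hE0 : (0 : ℤ) ≤ E := by positivity
  have hℓ0 : (0 : ℤ) ≤ ℓ := by positivity
  have hCQ : 3 * C ≤ Q := by rw [hQeq]; linarith
  have c₁ := And.intro (abs_le.1 B₁.1) (abs_le.1 B₁.2)
  have c₂ := And.intro (abs_le.1 B₂.1) (abs_le.1 B₂.2)
  have c₃ := And.intro (abs_le.1 B₃.1) (abs_le.1 B₃.2)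
  have hu' : v + s₁ + m' • w + s₂ + μ • u = z - s₃ := by rw [hvz]; abel
  have hw' : 2 * C ≤ (v + s₁ + m' • w).1 ∧ 2 * C ≤ (v + s₁ + m' • w).2 := by
    rcases hcase with hcase | hcase
    · have hc := Prod.le_def.1 hcase
      simp only [Prod.fst_zero, Prod.snd_zero] at hc
      have i1 : 0 ≤ (m' : ℤ) * w.1 := mul_nonneg (by positivity) hc.1
      have i2 : 0 ≤ (m' : ℤ) * w.2 := mul_nonneg (by positivity) hc.2
      simp only [Prod.fst_add, Prod.snd_add, Prod.smul_fst, Prod.smul_snd]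
      simp only [nsmul_eq_mul]
      constructor <;> linarith
    · rw [show v + s₁ + m' • w = z - s₃ - s₂ by rw [hvz, hcase, zero_nsmul]; abel]
      simp only [Prod.fst_sub, Prod.snd_sub]
      constructor <;> linarith
  obtain ⟨l, hl, hwalk⟩ := hrun.insert_cycles hM hs₁ hs₂ hs₃ hw hu (ht₁.trans hℓ') (ht₂.trans hℓ')
    (ht₃.trans hℓ') (hlw.trans hnℓ) (hlu.trans hnℓ) m' μ (by rw [← hC]; linarith)
    (by rw [← hC]; linarith) hw'.1 hw'.2
    (by rw [hu', Prod.fst_sub, ← hC]; linarith) (by rw [hu', Prod.snd_sub, ← hC]; linarith)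
  rw [← hvz] at hwalk
  refine ⟨l, ?_, hwalk⟩
  have hl' : (l : ℤ) ≤ l₀ + ℓ * (3 + m' + μ) := by exact_mod_cast hl
  push_cast at hl₀
  calc (l : ℤ) ≤ l₀ + ℓ * (3 + m' + μ) := hl'
    _ ≤ B * (1 + k + (m₀ + m)) + ℓ * (3 + m' + μ) := by gcongr
    _ ≤ Q * (1 + k + (Q + m)) + Q * (3 + m' + μ) := by
      gcongr
      · rw [hQeq]; linarith
      · rw [hQeq]; linarith
      · rw [hQeq]; linarith
    _ = _ := by ring

end

section
variable {n : ℕ} {V : VASS n} {q r : Fin n} {u w b a e₀ c : Vec2} {Q D K : ℤ}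

theorem det_cramer (b w y : Vec2) : det b w • y = det y w • b + det b y • w := by
  ext <;> simp only [det, Prod.fst_add, Prod.snd_add, Prod.smul_fst, Prod.smul_snd, smul_eq_mul] <;>
    ring

theorem abs_det_le_mul_add {z x : Vec2} (hx : Bdd Q x) (h1 : 0 ≤ z.1) (h2 : 0 ≤ z.2) :
    |det x z| ≤ Q * (z.1 + z.2) := by
  calc |det x z| ≤ |x.1 * z.2| + |x.2 * z.1| := abs_sub _ _
    _ = |x.1| * z.2 + |x.2| * z.1 := by rw [abs_mul, abs_mul, abs_of_nonneg h1, abs_of_nonneg h2]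
    _ ≤ Q * z.2 + Q * z.1 := by gcongr <;> first | exact hx.1 | exact hx.2
    _ = _ := by ring

theorem det_comm (x y : Vec2) : det x y = -det y x := by simp only [det]; ring

/-- Coordinates of `z` with respect to the basis `b`, `w`. -/
theorem exists_coords {z y : Vec2} (he : Bdd Q e₀) (hb : Bdd Q b) (hw : Bdd Q w)
    (hD : 0 < det b w) (hz : z = e₀ + det b w • y) (h1 : 0 ≤ z.1) (h2 : 0 ≤ z.2) :
    ∃ k m : ℤ, z = e₀ + k • b + m • w ∧ det z w - 2 * Q ^ 2 ≤ det b w * k ∧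
      det b z - 2 * Q ^ 2 ≤ det b w * m ∧
      |k| ≤ Q * (z.1 + z.2) + 2 * Q ^ 2 ∧ |m| ≤ Q * (z.1 + z.2) + 2 * Q ^ 2 := by
  refine ⟨det y w, det b y, by rw [hz, det_cramer]; abel, ?_⟩
  have e1 : det b w * det y w = det z w - det e₀ w := by
    rw [hz]; simp only [det, Prod.fst_add, Prod.snd_add, Prod.smul_fst, Prod.smul_snd, smul_eq_mul]
    ring
  have e2 : det b w * det b y = det b z - det b e₀ := by
    rw [hz]; simp only [det, Prod.fst_add, Prod.snd_add, Prod.smul_fst, Prod.smul_snd, smul_eq_mul]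
    ring
  have b1 := abs_det_le he hw
  have b2 := abs_det_le hb he
  have b3 : |det z w| ≤ Q * (z.1 + z.2) := by
    rw [det_comm, abs_neg]; exact abs_det_le_mul_add hw h1 h2
  have b4 := abs_det_le_mul_add hb h1 h2
  have aux : ∀ x : ℤ, |x| ≤ |det b w * x| := fun x => by
    rw [abs_mul, abs_of_pos hD]; exact le_mul_of_one_le_left (abs_nonneg _) hD
  have eQ : 2 * Q * Q = 2 * Q ^ 2 := by ring
  rw [eQ] at b1 b2
  refine ⟨?_, ?_, ?_, ?_⟩
  · rw [e1]; linarith [(abs_le.1 b1).2]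
  · rw [e2]; linarith [(abs_le.1 b2).2]
  · refine (aux _).trans ?_
    rw [e1]; exact (abs_sub _ _).trans (add_le_add b3 b1)
  · refine (aux _).trans ?_
    rw [e2]; exact (abs_sub _ _).trans (add_le_add b4 b2)

theorem ne_zero_of_dot {f : Vec2} (hK : 0 < K) (h : K ≤ dot f c) : f ≠ 0 := by
  rintro rfl
  simp only [dot, Prod.fst_zero, Prod.snd_zero] at h
  linarith

theorem dot_left (b z : Vec2) : dot (-b.2, b.1) z = det b z := by simp only [dot, det]; ring

theorem dot_right (w z : Vec2) : dot (w.2, -w.1) z = det z w := by simp only [dot, det]; ring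

theorem Flow.fat_of_wedge (hQ : 1 ≤ Q) (hb : Bdd Q b) (hw : Bdd Q w) (hD : 0 < det b w)
    (hDQ : det b w ≤ Q)
    (h : ∃ e₀ : Vec2, Bdd Q e₀ ∧ (∃ y : Vec2, c = e₀ + det b w • y) ∧ ∀ (k m : ℕ) (z : Vec2),
      z = e₀ + k • b + m • w → 3 * Q ≤ k → 5 * Q ≤ z.1 → 5 * Q ≤ z.2 →
      ∃ l : ℕ, (l : ℤ) ≤ Q * (4 + Q + k + m) ∧ Walk V NN l q 0 r z)
    (h1 : 24 * Q ^ 4 ≤ det b c) (h2 : 24 * Q ^ 4 ≤ det c w) : Fat V q r (24 * Q ^ 4) c := by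
  obtain ⟨e₀, he, ⟨y₀, hy₀⟩, H⟩ := h
  have q1 : Q ≤ Q ^ 4 := le_self_pow₀ hQ (by norm_num)
  have q2 : Q ^ 2 ≤ Q ^ 4 := pow_le_pow_right₀ hQ (by norm_num)
  have q3 : Q ^ 3 ≤ Q ^ 4 := pow_le_pow_right₀ hQ (by norm_num)
  have q0 : 0 ≤ Q ^ 2 := by positivity
  have hK : Q ≤ 24 * Q ^ 4 := by linarith
  have hK0 : 0 < 24 * Q ^ 4 := by linarith
  rw [← dot_left] at h1
  rw [← dot_right] at h2
  refine ⟨det b w, hD, by linarith, (-b.2, b.1), (w.2, -w.1), ⟨ne_zero_of_dot hK0 h1, ?_⟩,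
    ⟨ne_zero_of_dot hK0 h2, ?_⟩, h1, h2, ?_⟩
  · exact ⟨by simpa using hb.2.trans hK, hb.1.trans hK⟩
  · exact ⟨hw.2.trans hK, by simpa using hw.1.trans hK⟩
  intro z y hz hz1 hz2 hf hf'
  rw [dot_left] at hf
  rw [dot_right] at hf'
  obtain ⟨k, m, hkm, hk, hm, hk', hm'⟩ := exists_coords (z := z) (y := y₀ + y) he hb hw hD
    (by rw [hz, hy₀, smul_add]; abel) (by linarith) (by linarith)
  have hk3 : 3 * Q ≤ k := by
    refine le_of_mul_le_mul_left ?_ hD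
    nlinarith
  have hm0 : 0 ≤ m := by
    refine le_of_mul_le_mul_left ?_ hD
    linarith
  lift k to ℕ using by linarith
  lift m to ℕ using hm0
  rw [natCast_zsmul, natCast_zsmul] at hkm
  obtain ⟨l, hl, hwalk⟩ := H k m z hkm hk3 (by linarith) (by linarith)
  refine ⟨l, hl.trans ?_, hwalk⟩
  rw [Nat.abs_cast] at hk' hm'
  set S := z.1 + z.2 with hS
  have hS0 : 0 ≤ S := by linarith
  have s1 : Q ^ 2 * S ≤ Q ^ 4 * S := by gcongr
  have s2 : 0 ≤ Q ^ 4 * S := by positivity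
  calc Q * (4 + Q + k + m) ≤ Q * (4 + Q + (Q * S + 2 * Q ^ 2) + (Q * S + 2 * Q ^ 2)) := by gcongr
    _ = 4 * Q + Q ^ 2 + 2 * (Q ^ 2 * S) + 4 * Q ^ 3 := by ring
    _ ≤ 24 * (Q ^ 4 * S) + 24 * Q ^ 4 := by linarith
    _ = _ := by ring

theorem Flow.fat_of_turn (hQ : 1 ≤ Q) (hb : Bdd Q b) (hw : Bdd Q w) (hD : 0 < det b w)
    (hDQ : det b w ≤ Q) (hw0 : 0 ≤ w) (hwu : 0 < det w u) (hwuQ : det w u ≤ Q)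
    (hbu : det b u ≤ 0) (hbuQ : -Q ≤ det b u) (h : Flow V q r Q (det b w) c b a w u)
    (h1 : 24 * Q ^ 4 ≤ det b c) : Fat V q r (24 * Q ^ 4) c := by
  obtain ⟨e₀, he, ⟨y₀, hy₀⟩, H⟩ := h
  have q1 : Q ≤ Q ^ 4 := le_self_pow₀ hQ (by norm_num)
  have q2 : Q ^ 2 ≤ Q ^ 4 := pow_le_pow_right₀ hQ (by norm_num)
  have q3 : Q ^ 3 ≤ Q ^ 4 := pow_le_pow_right₀ hQ (by norm_num)
  have q0 : 0 ≤ Q ^ 2 := by positivity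
  have hK : Q ≤ 24 * Q ^ 4 := by linarith
  have hK0 : 0 < 24 * Q ^ 4 := by linarith
  rw [← dot_left] at h1
  have hf : ((-b.2, b.1) : Vec2) ≠ 0 ∧ Bdd (24 * Q ^ 4) ((-b.2, b.1) : Vec2) :=
    ⟨ne_zero_of_dot hK0 h1, by simpa using hb.2.trans hK, hb.1.trans hK⟩
  refine ⟨det b w, hD, by linarith, (-b.2, b.1), (-b.2, b.1), hf, hf, h1, h1, ?_⟩
  intro z y hz hz1 hz2 hf _
  rw [dot_left] at hf
  obtain ⟨k, m, hkm, -, hm, hk', hm'⟩ := exists_coords (z := z) (y := y₀ + y) he hb hw hD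
    (by rw [hz, hy₀, smul_add]; abel) (by linarith) (by linarith)
  have hm0 : 0 ≤ m := by
    refine le_of_mul_le_mul_left ?_ hD
    linarith
  rw [abs_of_nonneg hm0] at hm'
  set S := z.1 + z.2 with hS
  have hS0 : 0 ≤ S := by linarith
  have hrel : det w u • b + (-det b u) • w + det b w • u = 0 := by
    ext <;> simp only [det, Prod.fst_add, Prod.snd_add, Prod.smul_fst, Prod.smul_snd, smul_eq_mul,
      Prod.fst_zero, Prod.snd_zero] <;> ring
  obtain ⟨N, hN⟩ : ∃ N : ℤ, N = |k| + 3 * Q := ⟨_, rfl⟩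
  have hN0 : 0 ≤ N := by rw [hN]; positivity
  have hkm' : z = e₀ + (k + N * det w u) • b + (m + N * -det b u) • w + (N * det b w) • u := by
    have : N • (det w u • b + (-det b u) • w + det b w • u) = 0 := by rw [hrel, smul_zero]
    rw [hkm, add_smul, add_smul, mul_smul, mul_smul, mul_smul]
    rw [smul_add, smul_add] at this
    rw [← add_zero (e₀ + k • b + m • w), ← this]
    abel
  have hk1 : 3 * Q ≤ k + N * det w u := by
    have : N ≤ N * det w u := le_mul_of_one_le_right hN0 hwu
    linarith [neg_abs_le k]
  have hm1 : 0 ≤ m + N * -det b u := add_nonneg hm0 (mul_nonneg hN0 (by linarith))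
  have hu1 : 0 ≤ N * det b w := mul_nonneg hN0 hD.le
  have i1 : N * det w u ≤ N * Q := by gcongr
  have i2 : N * -det b u ≤ N * Q := by gcongr; linarith
  have i3 : N * det b w ≤ N * Q := by gcongr
  have i4 := le_abs_self k
  have hNle : N ≤ Q * S + 5 * Q ^ 2 := by rw [hN]; nlinarith
  have hk₁ := Int.toNat_of_nonneg (show 0 ≤ k + N * det w u by linarith)
  have hm₁ := Int.toNat_of_nonneg hm1
  have hu₁ := Int.toNat_of_nonneg hu1
  obtain ⟨l, hl, hwalk⟩ := H (k + N * det w u).toNat 0 (m + N * -det b u).toNat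
    (N * det b w).toNat z
    (by rw [← natCast_zsmul b, ← natCast_zsmul w, ← natCast_zsmul u, hk₁, hm₁, hu₁, zero_nsmul,
          add_zero]; exact hkm')
    (by rw [hk₁]; exact hk1) (Or.inl hw0) (by linarith) (by linarith)
  refine ⟨l, hl.trans ?_, hwalk⟩
  rw [hk₁, hm₁, hu₁]
  have s1 : Q ^ 2 * S ≤ Q ^ 4 * S := by gcongr
  have s2 : Q ^ 3 * S ≤ Q ^ 4 * S := by gcongr
  have s3 : 0 ≤ Q ^ 4 * S := by positivity
  calc Q * (4 + Q + (k + N * det w u) + (0 : ℕ) + (m + N * -det b u) + N * det b w)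
      ≤ Q * (4 + Q + (Q * S + 2 * Q ^ 2 + N * Q) + (0 : ℕ) + (Q * S + 2 * Q ^ 2 + N * Q)
          + N * Q) := by
        gcongr Q * ?_
        linarith
    _ = 4 * Q + Q ^ 2 + 2 * (Q ^ 2 * S) + 4 * Q ^ 3 + 3 * Q ^ 2 * N := by push_cast; ring
    _ ≤ 4 * Q + Q ^ 2 + 2 * (Q ^ 2 * S) + 4 * Q ^ 3 + 3 * Q ^ 2 * (Q * S + 5 * Q ^ 2) := by
        gcongr
    _ = 4 * Q + Q ^ 2 + 2 * (Q ^ 2 * S) + 4 * Q ^ 3 + 3 * (Q ^ 3 * S) + 15 * Q ^ 4 := by ring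
    _ ≤ 24 * (Q ^ 4 * S) + 24 * Q ^ 4 := by linarith
    _ = _ := by ring

end

section
variable {n : ℕ} {V : VASS n} {L : ℕ} {p q r : Fin n} {b a e x : Vec2}
  {M B N W : ℕ} {K : ℤ} {st : ℕ → Fin n} {c : ℕ → Vec2}

theorem swapV_swapV (V : VASS n) : swapV (swapV V) = V := by
  ext ⟨p, v, q⟩
  rw [mem_swapV, mem_swapV, Prod.swap_swap]

theorem Engine.to_swapV {B : ℤ} (h : Engine V q B p x b a e) :
    Engine (swapV V) q B p x.swap b.swap a.swap e.swap := by
  apply Engine.of_swapV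
  rwa [swapV_swapV, Prod.swap_swap]

theorem dot_swap (f z : Vec2) : dot f.swap z = dot f z.swap := by
  simp only [dot, Prod.fst_swap, Prod.snd_swap]; ring

theorem Fat.of_swapV {c : Vec2} (h : Fat (swapV V) q r K c.swap) : Fat V q r K c := by
  obtain ⟨D, hD, hDK, f, f', ⟨hf, hfK⟩, ⟨hf', hfK'⟩, h1, h2, H⟩ := h
  refine ⟨D, hD, hDK, f.swap, f'.swap, ⟨?_, hfK.symm⟩, ⟨?_, hfK'.symm⟩, by rwa [dot_swap],
    by rwa [dot_swap], ?_⟩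
  · exact fun h => hf (by rw [← Prod.swap_swap f, h]; rfl)
  · exact fun h => hf' (by rw [← Prod.swap_swap f', h]; rfl)
  intro z y hz hz1 hz2 hz3 hz4
  rw [dot_swap] at hz3 hz4
  obtain ⟨l, hl, hw⟩ := H z.swap y.swap (by rw [hz]; rfl) hz2 hz1 hz3 hz4
  refine ⟨l, by simpa [add_comm] using hl, ?_⟩
  have := hw.of_swapV
  rwa [Prod.swap_swap] at this

theorem lt_abs_det_of_not_thin {W : ℤ} {c g : Vec2} (h : ¬ Thin W c) (hg : g ≠ 0) (hgW : Bdd W g) :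
    W < |det g c| := not_le.1 fun hle => h ⟨g, hg, hgW, hle⟩

theorem Thin.of_swap {W : ℤ} {c : Vec2} (h : Thin W c.swap) : Thin W c := by
  obtain ⟨g, hg, hgW, hle⟩ := h
  refine ⟨g.swap, fun h => hg (by rw [← Prod.swap_swap g, h]; rfl), hgW.symm, ?_⟩
  rwa [← Prod.swap_swap c, det_swap, abs_neg]

/-- The width of the belts outside of which configurations are fat. -/
def fatBound (n M B : ℕ) : ℕ :=
  24 * flowBound n M B ^ 4 + seqBound n M B + (B + 2 * B * M + 2 * B * (n * M))

theorem modBound_le_flowBound : modBound n M B ≤ flowBound n M B := by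
  rw [flowBound]; omega

theorem add_le_flowBound : B + n * M ≤ flowBound n M B := by
  rw [flowBound]; omega

theorem one_le_flowBound (hn : 0 < n) : 1 ≤ flowBound n M B := by
  have : n ≤ skelLength n M B := by simp [skelLength]
  rw [flowBound]; omega

theorem flowBound_le_pow (hn : 0 < n) : flowBound n M B ≤ 24 * flowBound n M B ^ 4 := by
  have h : flowBound n M B ^ 1 ≤ flowBound n M B ^ 4 :=
    Nat.pow_le_pow_right (one_le_flowBound hn) (by norm_num)
  rw [pow_one] at h
  omega

theorem cyc_zero (s : Fin n) : Cyc V s 0 := ⟨0, Nat.zero_le _, .nil trivial⟩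

theorem fat_of_engine_of_pos (hM : EffBdd V M) (htr : IsTrace V NN L st c) {T t : ℕ} (hT : T ≤ t)
    (ht : t ≤ L) (heng : Engine V q B (st T) (c T) b a e) (hW : fatBound n M B ≤ W)
    (hthin : ¬ Thin W (c t)) (hpos : 0 < det b (c t)) :
    Fat V q (st t) (24 * (flowBound n M B : ℤ) ^ 4) (c t) := by
  have hn : 0 < n := q.pos
  have heng' := heng
  obtain ⟨⟨hb1, hb2, hb⟩, ⟨ha, hab⟩, -, -, -, hσ⟩ := heng'
  have hQ1 : (1 : ℤ) ≤ flowBound n M B := by exact_mod_cast one_le_flowBound hn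
  have hQB : (B : ℤ) + n * M ≤ flowBound n M B := by exact_mod_cast add_le_flowBound
  have hQE : (modBound n M B : ℤ) ≤ flowBound n M B := by exact_mod_cast modBound_le_flowBound
  have hQK : (flowBound n M B : ℤ) ≤ 24 * (flowBound n M B : ℤ) ^ 4 := by
    exact_mod_cast flowBound_le_pow hn
  have hW' : 24 * (flowBound n M B : ℤ) ^ 4 + seqBound n M B +
      (B + 2 * B * M + 2 * B * (n * M)) ≤ W := by exact_mod_cast hW
  have hE : (modBound n M B : ℤ) = 2 * (B + n * M) * (B + n * M) := by simp [modBound]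
  have hB0 : (0 : ℤ) ≤ B := by positivity
  have hBM : (0 : ℤ) ≤ 2 * B * M := by positivity
  have hnM : (0 : ℤ) ≤ n * M := by positivity
  have hBnM : (0 : ℤ) ≤ 2 * B * (n * M) := by positivity
  have hseq : (0 : ℤ) ≤ seqBound n M B := by positivity
  have hmod : ∀ {x y : Vec2}, Bdd (B + n * M) x → Bdd (B + n * M) y →
      |det x y| ≤ modBound n M B := fun hx hy => by rw [hE]; exact abs_det_le hx hy
  have hb' : Bdd (B + n * M) b := hb.mono (by linarith)
  have ha' : Bdd (B + n * M) a := hab.mono (by linarith)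
  have hcyc : ∀ {s v}, Cyc V s v → Bdd (B + n * M) v := fun h => (h.bdd hM).mono (by linarith)
  have hQ : ∀ {v : Vec2}, Bdd (B + n * M) v → Bdd (flowBound n M B) v := fun h => h.mono hQB
  have hbW : W < |det b (c t)| := lt_abs_det_of_not_thin hthin
    (by rintro rfl; simp at hb1) (hb'.mono (by linarith))
  rw [abs_of_pos hpos] at hbW
  have hct := htr.pos t ht
  have hnil : Walk V NN 0 (st t) (c t) (st t) (c t) := .nil hct
  rcases hσ 1 (Or.inl rfl) with hx | ⟨hba, hz⟩
  · rw [one_mul] at hx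
    rcases exists_cycle_sequence hM htr hT ht hb1 hb2 hb hx (by linarith) with
      ⟨i, w, hTi, hit, hw, hbw, hwc⟩ | ⟨i, j, w, u, hTi, hij, hjt, hw, hu, hbw, hw0, hwu, hbu⟩
    · have hwW : W < |det w (c t)| := lt_abs_det_of_not_thin hthin
        (by rintro rfl; simp [det] at hbw) ((hcyc hw).mono (by linarith))
      have hcw : W < det (c t) w := by
        rw [det_comm]
        rcases lt_abs.1 hwW with h | h <;> linarith
      obtain ⟨e₀, he₀, hy, H⟩ := exists_flow hM heng (htr.walk' hTi (hit.trans ht))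
        (htr.walk' hit ht) hnil hw (cyc_zero _) hbw ((le_abs_self _).trans (hmod hb' (hcyc hw)))
      refine Flow.fat_of_wedge hQ1 (hQ hb') (hQ (hcyc hw)) hbw
        (((le_abs_self _).trans (hmod hb' (hcyc hw))).trans hQE) ⟨e₀, he₀, hy, ?_⟩
        (by linarith) (by linarith)
      intro k m z hz hk h1 h2
      obtain ⟨l, hl, hwalk⟩ := H k 0 m 0 z (by simpa using hz) hk (Or.inr rfl) h1 h2
      exact ⟨l, by simpa using hl, hwalk⟩
    · have hflow := exists_flow hM heng (htr.walk' hTi ((hij.trans hjt).trans ht))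
        (htr.walk' hij (hjt.trans ht)) (htr.walk' hjt ht) hw hu hbw
        ((le_abs_self _).trans (hmod hb' (hcyc hw)))
      exact Flow.fat_of_turn hQ1 (hQ hb') (hQ (hcyc hw)) hbw
        (((le_abs_self _).trans (hmod hb' (hcyc hw))).trans hQE) hw0 hwu
        (((le_abs_self _).trans (hmod (hcyc hw) (hcyc hu))).trans hQE) hbu
        (by linarith [(abs_le.1 (hmod hb' (hcyc hu))).1]) hflow (by linarith)
  · rw [one_mul] at hba
    have hca := hz _ hct.1 hct.2
    rw [one_mul] at hca
    have haW : W < |det a (c t)| := lt_abs_det_of_not_thin hthin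
      (by rintro rfl; simp [det] at hba) (ha'.mono (by linarith))
    rw [det_comm, abs_neg, abs_of_nonneg hca] at haW
    obtain ⟨e₀, he₀, hy, H⟩ := exists_flow hM heng (htr.walk' hT ht) hnil hnil (cyc_zero _)
      (cyc_zero _) hba ((le_abs_self _).trans (hmod hb' ha'))
    refine Flow.fat_of_wedge hQ1 (hQ hb') (hQ ha') hba
      (((le_abs_self _).trans (hmod hb' ha')).trans hQE) ⟨e₀, he₀, hy, ?_⟩
      (by linarith) (by linarith)
    intro k m z hz hk h1 h2
    obtain ⟨l, hl, hwalk⟩ := H k m 0 0 z (by simpa using hz) hk (Or.inr rfl) h1 h2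
    exact ⟨l, by simpa using hl, hwalk⟩

theorem fat_of_engine (hM : EffBdd V M) (htr : IsTrace V NN L st c) {T t : ℕ} (hT : T ≤ t)
    (ht : t ≤ L) (heng : Engine V q B (st T) (c T) b a e) (hW : fatBound n M B ≤ W)
    (hthin : ¬ Thin W (c t)) : Fat V q (st t) (24 * (flowBound n M B : ℤ) ^ 4) (c t) := by
  rcases lt_trichotomy (det b (c t)) 0 with h | h | h
  · refine Fat.of_swapV ?_
    exact fat_of_engine_of_pos hM.swapV htr.to_swapV hT ht heng.to_swapV hW
      (fun h => hthin h.of_swap) (by rw [det_swap]; linarith)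
  · refine (hthin ⟨b, ?_, heng.1.2.2.mono ?_, ?_⟩).elim
    · rintro rfl; exact lt_irrefl _ heng.1.1
    · have : B ≤ W := le_trans (by rw [fatBound]; omega) hW
      exact_mod_cast this
    · rw [h, abs_zero]; positivity
  · exact fat_of_engine_of_pos hM htr hT ht heng hW hthin h

theorem lt_coords_of_not_thin {W : ℤ} {c : Vec2} (hW : 1 ≤ W) (h : ¬ Thin W c) (h1 : 0 ≤ c.1)
    (h2 : 0 ≤ c.2) : W < c.1 ∧ W < c.2 := by
  have e1 := lt_abs_det_of_not_thin (g := (0, 1)) h (by simp) ⟨by simp; linarith, by simpa⟩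
  have e2 := lt_abs_det_of_not_thin (g := (1, 0)) h (by simp) ⟨by simpa, by simp; linarith⟩
  simp only [det] at e1 e2
  rw [zero_mul, one_mul, zero_sub, abs_neg, abs_of_nonneg h1] at e1
  rw [zero_mul, one_mul, sub_zero, abs_of_nonneg h2] at e2
  exact ⟨e1, e2⟩

theorem one_le_fatBound (hn : 0 < n) : 1 ≤ fatBound n M B := by
  have := one_le_flowBound (M := M) (B := B) hn
  have := flowBound_le_pow (M := M) (B := B) hn
  rw [fatBound]; omega

/-- Outside of the belts, all configurations of a run are fat. -/
theorem fat_of_not_thin (hM : EffBdd V M) (htr : IsTrace V NN L st c) (h0 : c 0 = 0) {t : ℕ}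
    (ht : t ≤ L) (hN : growth n M ^ n + M ≤ N)
    (hW : fatBound n M (engineBound n M N) + (N + n * M) ≤ W) (hthin : ¬ Thin W (c t)) :
    Fat V (st 0) (st t) (24 * (flowBound n M (engineBound n M N) : ℤ) ^ 4) (c t) := by
  obtain ⟨h1, h2⟩ := lt_coords_of_not_thin
    (by have := one_le_fatBound (M := M) (B := engineBound n M N) (st 0).pos
        exact_mod_cast (by omega : 1 ≤ W)) hthin (htr.pos t ht).1 (htr.pos t ht).2
  have hW' : (N : ℤ) + n * M ≤ W := by
    have : N + n * M ≤ W := by omega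
    exact_mod_cast this
  obtain ⟨T, hT, b, a, e, heng⟩ := exists_engine hM htr h0 ht hN (by linarith) (by linarith)
  exact fat_of_engine hM htr hT ht heng (by omega) hthin

end

section
variable {n : ℕ} {V : VASS n} {L : ℕ} {q r : Fin n} {M N : ℕ}

/-- The bound for the constants of fat configurations, in terms of that for engines. -/
def fatConst (n M B : ℕ) : ℕ := 24 * flowBound n M B ^ 4

/-- The width of the belts. -/
def beltWidth (n M N : ℕ) : ℕ :=
  fatBound n M (engineBound n M N) + (N + n * M)

/-- The bound for the length of a shortest run. -/
def runBound (n M N : ℕ) : ℕ :=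
  n * (thinHeight n (beltWidth n M N) M + 1) ^ 2 +
    2 * (fatConst n M (engineBound n M N) *
      (4 * fatConst n M (engineBound n M N) * (fatConst n M (engineBound n M N) +
        2 * fatConst n M (engineBound n M N) * fatConst n M (engineBound n M N) *
        (fatConst n M (engineBound n M N) * fatConst n M (engineBound n M N))) + 1))

theorem Walk.exists_short (hM : EffBdd V M) (h : Walk V NN L q 0 r 0)
    (hN : growth n M ^ n + M ≤ N) : ∃ L', L' ≤ runBound n M N ∧ Walk V NN L' q 0 r 0 := by
  classical
  have hex : ∃ L, Walk V NN L q 0 r 0 := ⟨L, h⟩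
  have hmin : ∀ L', Walk V NN L' q 0 r 0 → Nat.find hex ≤ L' := fun L' h' => Nat.find_min' hex h'
  have hL := Nat.find_spec hex
  generalize Nat.find hex = l at hmin hL
  clear hex h
  obtain ⟨st, c, htr, hs, hc, hs', hc'⟩ := hL.exists_trace
  by_cases hthin : ∀ i ≤ l, Thin (beltWidth n M N) (c i)
  · have hbox : IsTrace V (Box (thinHeight n (beltWidth n M N) M)) l st c := by
      refine ⟨htr.step, fun i hi => ?_⟩
      have h1 := htr.pos i hi
      have h2 := height_le_of_thin hM htr hc hc' (by rw [hs, hs']; exact hmin) hthin hi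
      exact ⟨⟨h1.1, by linarith [h1.2]⟩, h1.2, by linarith [h1.1]⟩
    have hw := hbox.walk' (Nat.zero_le l) le_rfl
    rw [hs, hc, hs', hc'] at hw
    obtain ⟨L', hL', hw'⟩ := hw.shorten_box
    refine ⟨L', hL'.trans (by rw [runBound]; omega), hw'.mono fun s x hx => ⟨hx.1.1, hx.2.1⟩⟩
  · push Not at hthin
    obtain ⟨t, ht, hthin⟩ := hthin
    have hf := fat_of_not_thin hM htr hc ht hN le_rfl hthin
    rw [hs] at hf
    have hrev := (htr.walk' ht le_rfl).to_reverse
    rw [hs', hc'] at hrev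
    obtain ⟨st', c', htr', hs1, hc1, hs2, hc2⟩ := hrev.exists_trace
    have hf' := fat_of_not_thin hM.reverse htr' hc1 le_rfl hN le_rfl (by rwa [hc2])
    rw [hs1, hs2, hc2] at hf'
    have hn : 0 < n := q.pos
    have hfat := one_le_fatBound (M := M) (B := engineBound n M N) hn
    have hbig := lt_coords_of_not_thin (by
      have : 1 ≤ beltWidth n M N := by rw [beltWidth]; omega
      exact_mod_cast this) hthin (htr.pos t ht).1 (htr.pos t ht).2
    have hK : 24 * (flowBound n M (engineBound n M N) : ℤ) ^ 4 ≤ beltWidth n M N := by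
      have : 24 * flowBound n M (engineBound n M N) ^ 4 ≤ beltWidth n M N := by
        rw [beltWidth, fatBound]; omega
      exact_mod_cast this
    obtain ⟨L', hL', hw⟩ := hf.exists_walk hf' (by linarith [hbig.1]) (by linarith [hbig.2])
    refine ⟨L', ?_, hw⟩
    rw [repBound, show 24 * (flowBound n M (engineBound n M N) : ℤ) ^ 4 =
      (fatConst n M (engineBound n M N) : ℕ) by simp [fatConst]] at hL'
    refine le_trans ?_ (Nat.le_add_left _ _)
    exact_mod_cast hL'

/-- A function is polynomially bounded in its arguments. -/
def PolyBdd (f : ℕ → ℕ → ℕ → ℕ) : Prop :=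
  ∃ k, ∀ A n M N, 2 ≤ A → n ≤ A → M ≤ A → N ≤ A → f n M N ≤ A ^ k

namespace PolyBdd

variable {f g : ℕ → ℕ → ℕ → ℕ}

theorem const (d : ℕ) : PolyBdd fun _ _ _ => d :=
  ⟨d, fun _ _ _ _ hA _ _ _ => d.lt_two_pow_self.le.trans (Nat.pow_le_pow_left hA d)⟩

theorem fst : PolyBdd fun n _ _ => n := ⟨1, fun _ _ _ _ _ h _ _ => by simpa⟩

theorem snd : PolyBdd fun _ M _ => M := ⟨1, fun _ _ _ _ _ _ h _ => by simpa⟩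

theorem trd : PolyBdd fun _ _ N => N := ⟨1, fun _ _ _ _ _ _ _ h => by simpa⟩

theorem mul (hf : PolyBdd f) (hg : PolyBdd g) : PolyBdd fun n M N => f n M N * g n M N := by
  obtain ⟨k, hk⟩ := hf
  obtain ⟨l, hl⟩ := hg
  refine ⟨k + l, fun A n M N hA h1 h2 h3 => ?_⟩
  rw [pow_add]
  exact Nat.mul_le_mul (hk A n M N hA h1 h2 h3) (hl A n M N hA h1 h2 h3)

theorem add (hf : PolyBdd f) (hg : PolyBdd g) : PolyBdd fun n M N => f n M N + g n M N := by
  obtain ⟨k, hk⟩ := hf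
  obtain ⟨l, hl⟩ := hg
  refine ⟨k + l + 1, fun A n M N hA h1 h2 h3 => ?_⟩
  have i1 : A ^ k ≤ A ^ (k + l) := Nat.pow_le_pow_right (by omega) (by omega)
  have i2 : A ^ l ≤ A ^ (k + l) := Nat.pow_le_pow_right (by omega) (by omega)
  have i3 : A ^ (k + l) * 2 ≤ A ^ (k + l) * A := Nat.mul_le_mul_left _ hA
  have i4 := hk A n M N hA h1 h2 h3
  have i5 := hl A n M N hA h1 h2 h3
  rw [pow_succ]
  change f n M N + g n M N ≤ _
  omega

theorem pow (hf : PolyBdd f) (d : ℕ) : PolyBdd fun n M N => f n M N ^ d := by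
  obtain ⟨k, hk⟩ := hf
  refine ⟨k * d, fun A n M N hA h1 h2 h3 => ?_⟩
  rw [pow_mul]
  exact Nat.pow_le_pow_left (hk A n M N hA h1 h2 h3) d

theorem stripLength : PolyBdd fun n M N => stripLength n M N := by
  unfold TwoVASS.stripLength
  repeat'
    first
    | assumption | exact fst | exact snd | exact trd | exact const _
    | with_reducible apply add | with_reducible apply mul

theorem engineBound : PolyBdd fun n M N => engineBound n M N := by
  unfold TwoVASS.engineBound
  repeat'
    first
    | assumption | exact fst | exact snd | exact trd | exact stripLength
    | exact const _ | with_reducible apply add | with_reducible apply mul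
    | with_reducible apply pow

theorem modBound (hf : PolyBdd f) : PolyBdd fun n M N => modBound n M (f n M N) := by
  unfold TwoVASS.modBound
  repeat'
    first
    | assumption | exact fst | exact snd | exact const _ | with_reducible apply add
    | with_reducible apply mul

theorem skelLength (hf : PolyBdd f) : PolyBdd fun n M N => skelLength n M (f n M N) := by
  unfold TwoVASS.skelLength
  repeat'
    first
    | assumption | exact fst | exact snd | with_reducible apply modBound
    | exact const _ | with_reducible apply add | with_reducible apply mul

theorem flowBound (hf : PolyBdd f) : PolyBdd fun n M N => flowBound n M (f n M N) := by
  unfold TwoVASS.flowBound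
  repeat'
    first
    | assumption | exact fst | exact snd | with_reducible apply modBound
    | with_reducible apply skelLength | exact const _ | with_reducible apply add
    | with_reducible apply mul

theorem seqBound (hf : PolyBdd f) : PolyBdd fun n M N => seqBound n M (f n M N) := by
  unfold TwoVASS.seqBound
  repeat'
    first
    | assumption | exact fst | exact snd | exact const _ | with_reducible apply add
    | with_reducible apply mul

theorem fatBound (hf : PolyBdd f) : PolyBdd fun n M N => fatBound n M (f n M N) := by
  unfold TwoVASS.fatBound
  repeat'
    first
    | assumption | exact fst | exact snd | with_reducible apply flowBound
    | with_reducible apply seqBound | exact const _ | with_reducible apply add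
    | with_reducible apply mul | with_reducible apply pow

theorem fatConst (hf : PolyBdd f) : PolyBdd fun n M N => fatConst n M (f n M N) := by
  unfold TwoVASS.fatConst
  repeat'
    first
    | assumption | exact fst | exact snd | with_reducible apply flowBound
    | exact const _ | with_reducible apply add | with_reducible apply mul
    | with_reducible apply pow

theorem beltSep (hf : PolyBdd f) : PolyBdd fun n M N => beltSep (f n M N) M := by
  unfold TwoVASS.beltSep
  repeat'
    first
    | assumption | exact fst | exact snd | exact const _ | with_reducible apply add
    | with_reducible apply mul

theorem thinHeight (hf : PolyBdd f) : PolyBdd fun n M N => thinHeight n (f n M N) M := by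
  unfold TwoVASS.thinHeight
  repeat'
    first
    | assumption | exact fst | exact snd | with_reducible apply beltSep
    | exact const _ | with_reducible apply add | with_reducible apply mul
    | with_reducible apply pow

theorem beltWidth : PolyBdd fun n M N => beltWidth n M N := by
  unfold TwoVASS.beltWidth
  repeat'
    first
    | assumption | exact fst | exact snd | exact trd | exact engineBound
    | with_reducible apply fatBound | exact const _ | with_reducible apply add
    | with_reducible apply mul

theorem runBound : PolyBdd fun n M N => runBound n M N := by
  unfold TwoVASS.runBound
  have := engineBound.fatConst
  have := beltWidth.thinHeight
  repeat'
    first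
    | assumption | exact fst | exact snd | exact trd | exact const _
    | with_reducible apply add | with_reducible apply mul | with_reducible apply pow

end PolyBdd

theorem growth_pow_add_le (hn : 0 < n) :
    growth n M ^ n + M ≤ 2 * ((2 * (n * M) + 2) ^ 2) ^ n ∧ n ≤ 2 * ((2 * (n * M) + 2) ^ 2) ^ n := by
  have hMn : M ≤ n * M := Nat.le_mul_of_pos_left _ hn
  have h1 : growth n M ≤ (2 * (n * M) + 2) ^ 2 := by
    rw [growth, pow_two]
    apply Nat.mul_le_mul
    · omega
    · rw [mul_assoc]; omega
  have h2 : growth n M ^ n ≤ ((2 * (n * M) + 2) ^ 2) ^ n := Nat.pow_le_pow_left h1 n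
  have h3 : M ≤ (2 * (n * M) + 2) ^ 2 := by nlinarith
  have h4 : (2 * (n * M) + 2) ^ 2 ≤ ((2 * (n * M) + 2) ^ 2) ^ n := Nat.le_self_pow hn.ne' _
  have h5 : 2 ^ n ≤ ((2 * (n * M) + 2) ^ 2) ^ n := Nat.pow_le_pow_left (by nlinarith) n
  have h6 := n.lt_two_pow_self
  omega

theorem effBdd_vassNorm (V : VASS n) : EffBdd V (vassNorm V) := by
  intro t ht
  have h : vnorm t.2.1 ≤ vassNorm V := Finset.le_sup (f := fun t : Transition n => vnorm t.2.1) ht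
  rw [vnorm, max_le_iff] at h
  rw [Bdd, Int.abs_eq_natAbs, Int.abs_eq_natAbs]
  exact_mod_cast h

theorem effect_cons (t : Transition n) (π : List (Transition n)) :
    effect (t :: π) = t.2.1 + effect π := by simp [effect]

theorem endState_cons (t : Transition n) (π : List (Transition n)) (q : Fin n) :
    endState (t :: π) q = endState π t.2.2 := by
  simp only [endState, stateAt, List.take_length, List.getLast?_cons]
  cases π.getLast? <;> rfl

theorem isRun_nil {u : Vec2} : IsRun V [] q u ↔ 0 ≤ u := by
  refine ⟨fun h => by simpa [vecAt, effect] using h.2.2 0 le_rfl, fun h =>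
    ⟨⟨by simp, List.isChain_nil⟩, by simp [startsAt], fun i _ => by simpa [vecAt, effect] using h⟩⟩

theorem isRun_cons {t : Transition n} {π : List (Transition n)} {u : Vec2} :
    IsRun V (t :: π) q u ↔ 0 ≤ u ∧ t ∈ V ∧ t.1 = q ∧ IsRun V π t.2.2 (u + t.2.1) := by
  have hvec : ∀ i, vecAt (t :: π) u (i + 1) = vecAt π (u + t.2.1) i := fun i => by
    simp only [vecAt, List.take_succ_cons, effect_cons, add_assoc]
  have hchain : (t :: π).IsChain (fun s t => s.2.2 = t.1) ↔
      startsAt π t.2.2 ∧ π.IsChain (fun s t => s.2.2 = t.1) := by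
    rw [List.isChain_cons, startsAt]
    simp only [eq_comm]
  constructor
  · rintro ⟨⟨hV, hc⟩, hs, hv⟩
    obtain ⟨h1, h2⟩ := hchain.1 hc
    refine ⟨by simpa [vecAt, effect] using hv 0 (Nat.zero_le _), hV t (by simp), hs t (by simp),
      ⟨fun s hs => hV s (by simp [hs]), h2⟩, h1, fun i hi => ?_⟩
    rw [← hvec]
    exact hv _ (by simpa using hi)
  · rintro ⟨hu, htV, htq, ⟨hV, hc⟩, hs, hv⟩
    refine ⟨⟨List.forall_mem_cons.2 ⟨htV, hV⟩, hchain.2 ⟨hs, hc⟩⟩,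
      by simpa [startsAt] using htq, fun i hi => ?_⟩
    cases i with
    | zero => simpa [vecAt, effect] using hu
    | succ i => rw [hvec]; exact hv i (by simpa using hi)

theorem walk_iff {u w : Vec2} : Walk V NN L q u r w ↔
    ∃ π, IsRun V π q u ∧ π.length = L ∧ endState π q = r ∧ u + effect π = w := by
  constructor
  · intro h
    induction h with
    | nil h => exact ⟨[], isRun_nil.2 h, rfl, rfl, by simp [effect]⟩
    | @cons L p q r u v w hu ht hw ih =>
      obtain ⟨π, h1, h2, h3, h4⟩ := ih
      exact ⟨(p, v, q) :: π, isRun_cons.2 ⟨hu, ht, rfl, h1⟩, by simp [h2],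
        by rw [endState_cons, h3], by rw [effect_cons, ← add_assoc, h4]⟩
  · rintro ⟨π, h1, rfl, rfl, rfl⟩
    induction π generalizing q u with
    | nil => rw [effect, List.map_nil, List.sum_nil, add_zero]; exact .nil (isRun_nil.1 h1)
    | cons t π ih =>
      obtain ⟨hu, ht, rfl, h⟩ := isRun_cons.1 h1
      rw [endState_cons, effect_cons, ← add_assoc]
      exact .cons hu ht (ih h)

end
end TwoVASS

/-- Exponential run theorem.  There is a polynomial `p` with
natural coefficients such that for every 2-VASS `V` (with `n` states and norm
`M`) and every (0,0)-run of `V`, there is a (0,0)-run of `V` of length at most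
`p(nM)ⁿ` with the same source and target configurations. -/
theorem exponential_run :
    ∃ p : Polynomial ℕ, ∀ (n : ℕ) (V : VASS n) (π : List (Transition n)) (q : Fin n),
      IsZeroRun V π q →
      ∃ π' : List (Transition n),
        IsZeroRun V π' q ∧ endState π' q = endState π q ∧
        π'.length ≤ (p.eval (n * vassNorm V)) ^ n := by
  obtain ⟨k, hk⟩ := TwoVASS.PolyBdd.runBound
  refine ⟨(2 * (2 * Polynomial.X + 2) ^ 2) ^ k, fun n V π q ⟨hrun, heff⟩ => ?_⟩
  have hn : 0 < n := q.pos
  set M := vassNorm V with hM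
  obtain ⟨L', hL', hw⟩ :=
    (TwoVASS.walk_iff.2 ⟨π, hrun, rfl, rfl, by rw [heff, add_zero]⟩).exists_short
      (TwoVASS.effBdd_vassNorm V) (TwoVASS.growth_pow_add_le hn).1
  obtain ⟨π', hrun', hlen, hend, heff'⟩ := TwoVASS.walk_iff.1 hw
  refine ⟨π', ⟨hrun', by rwa [zero_add] at heff'⟩, hend, ?_⟩
  rw [hlen]
  have hA := TwoVASS.growth_pow_add_le (n := n) (M := M) hn
  have hg := TwoVASS.one_le_growth n M
  have hgn : 1 ≤ TwoVASS.growth n M ^ n := Nat.one_le_pow _ _ hg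
  have h1 : 1 ≤ ((2 * (n * M) + 2) ^ 2) ^ n := Nat.one_le_pow _ _ (by positivity)
  refine (hL'.trans (hk _ n M _ (by omega) hA.2 (by omega) le_rfl)).trans ?_
  simp only [Polynomial.eval_pow, Polynomial.eval_mul, Polynomial.eval_add, Polynomial.eval_X,
    Polynomial.eval_ofNat]
  rw [← pow_mul _ k n, mul_comm k n, pow_mul, mul_pow _ _ n]
  exact Nat.pow_le_pow_left (Nat.mul_le_mul_right _ (Nat.le_self_pow hn.ne' 2)) k
end

section
/- Small solutions of linear inequality systems: there exists a constant c ∈ ℕ such that for all d, k, M ∈ ℕ with M ≥ 1, every system of d linear inequalities in k variables with integer coefficients all of absolute value at most M (that is, a system A·x ≥ b with A ∈ ℤ^{d×k}, b ∈ ℤ^d, all entries of A and b of absolute value at most M) which admits a solution x ∈ ℕ^k, admits a solution x ∈ ℕ^k all of whose entries are at most (c·k·M)^d. -/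
/-- `x ≤ m` lies within one unit above some point of the segment from `0` to `m`. -/
def NearSegment {ι : Type*} (m x : ι → ℕ) : Prop :=
  x ≤ m ∧ ∃ t : ℚ, ∀ j, t * m j ≤ x j ∧ (x j : ℚ) ≤ t * m j + 1

theorem NearSegment.exists_succ {ι : Type*} [Fintype ι] {m x : ι → ℕ}
    (hx : NearSegment m x) (hne : x ≠ m) :
    ∃ y, NearSegment m y ∧ x ≤ y ∧ ∑ j, y j = ∑ j, x j + 1 := by
  classical
  obtain ⟨hle, t, ht⟩ := hx
  have hS : (Finset.univ.filter fun j => x j < m j).Nonempty := by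
    by_contra h
    rw [Finset.not_nonempty_iff_eq_empty, Finset.filter_eq_empty_iff] at h
    exact hne (le_antisymm hle fun j => not_lt.1 (h (Finset.mem_univ j)))
  obtain ⟨i, hi, hmin⟩ := Finset.exists_min_image _ (fun j => (x j : ℚ) / m j) hS
  simp only [Finset.mem_filter, Finset.mem_univ, true_and] at hi hmin
  have hmi : (0 : ℚ) < m i := by exact_mod_cast (Nat.zero_le _).trans_lt hi
  have htle : t ≤ x i / m i := by
    rw [le_div_iff₀ hmi]
    exact (ht i).1
  have hlow : ∀ j, (x i : ℚ) / m i * m j ≤ x j := by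
    intro j
    rcases (hle j).lt_or_eq with h | h
    · have hmj : (0 : ℚ) < m j := by exact_mod_cast (Nat.zero_le _).trans_lt h
      exact (le_div_iff₀ hmj).1 (hmin j h)
    · rw [h]
      refine mul_le_of_le_one_left (Nat.cast_nonneg _) ((div_le_one hmi).2 ?_)
      exact_mod_cast hi.le
  have hxy : x ≤ x + Pi.single i 1 := le_add_of_nonneg_right (by simp)
  refine ⟨x + Pi.single i 1, ⟨fun j => ?_, x i / m i, fun j => ⟨?_, ?_⟩⟩, hxy, ?_⟩
  · rcases eq_or_ne j i with rfl | h
    · simpa using hi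
    · simpa [h] using hle j
  · exact (hlow j).trans (by exact_mod_cast hxy j)
  · rcases eq_or_ne j i with rfl | h
    · simp [div_mul_cancel₀ _ hmi.ne']
    · have := mul_le_mul_of_nonneg_right htle (Nat.cast_nonneg (α := ℚ) (m j))
      simpa [h] using (ht j).2.trans (by linarith)
  · simp [Finset.sum_add_distrib]

/-- There is a monotone lattice path from `0` to `m` with unit steps staying near the segment. -/
theorem exists_path_nearSegment {ι : Type*} [Fintype ι] (m : ι → ℕ) :
    ∃ f : ℕ → ι → ℕ, Monotone f ∧ (∀ n, NearSegment m (f n)) ∧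
      ∀ n ≤ ∑ j, m j, ∑ j, f n j = n := by
  have step : ∀ x : {x // NearSegment m x}, ∃ y : {y // NearSegment m y},
      x.1 ≤ y.1 ∧ (x.1 ≠ m → ∑ j, y.1 j = ∑ j, x.1 j + 1) := by
    intro x
    by_cases h : x.1 = m
    · exact ⟨x, le_rfl, fun h' => absurd h h'⟩
    · obtain ⟨y, hy, hxy, hsum⟩ := x.2.exists_succ h
      exact ⟨⟨y, hy⟩, hxy, fun _ => hsum⟩
  choose g hgle hgsum using step
  have h0 : NearSegment m 0 := ⟨fun _ => Nat.zero_le _, 0, by simp⟩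
  refine ⟨fun n => (g^[n] ⟨0, h0⟩).1, monotone_nat_of_le_succ fun n => ?_,
    fun n => (g^[n] ⟨0, h0⟩).2, fun n => ?_⟩
  · rw [Function.iterate_succ_apply']
    exact hgle _
  · induction n with
    | zero => simp
    | succ n ih =>
      intro hn
      have hsum := ih (by omega)
      beta_reduce at hsum ⊢
      rw [Function.iterate_succ_apply', hgsum _ fun h => ?_, hsum]
      rw [h] at hsum
      omega

theorem NearSegment.sum_mem_Icc {ι : Type*} [Fintype ι] {m x : ι → ℕ} (hx : NearSegment m x)
    {a : ι → ℤ} (ha : ∑ j, a j * (m j : ℤ) = 0) :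
    ∑ j, a j * (x j : ℤ) ∈ Finset.Icc (∑ j, min (a j) 0) (∑ j, max (a j) 0) := by
  obtain ⟨-, t, ht⟩ := hx
  have ha' : ∑ j, (a j : ℚ) * m j = 0 := by exact_mod_cast ha
  have key : ∑ j, (a j : ℚ) * x j = ∑ j, (a j : ℚ) * (x j - t * m j) := by
    have : ∑ j, (a j : ℚ) * (t * m j) = 0 := by
      simp_rw [mul_left_comm _ t, ← Finset.mul_sum, ha', mul_zero]
    simp_rw [mul_sub, Finset.sum_sub_distrib, this, sub_zero]
  rw [Finset.mem_Icc]
  constructor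
  · have : ∑ j, min (a j : ℚ) 0 ≤ ∑ j, (a j : ℚ) * x j := by
      rw [key]
      refine Finset.sum_le_sum fun j _ => ?_
      obtain ⟨h1, h2⟩ := ht j
      rcases le_total (a j : ℚ) 0 with h | h
      · rw [min_eq_left h]; nlinarith
      · rw [min_eq_right h]; nlinarith
    exact_mod_cast this
  · have : ∑ j, (a j : ℚ) * x j ≤ ∑ j, max (a j : ℚ) 0 := by
      rw [key]
      refine Finset.sum_le_sum fun j _ => ?_
      obtain ⟨h1, h2⟩ := ht j
      rcases le_total (a j : ℚ) 0 with h | h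
      · rw [max_eq_right h]; nlinarith
      · rw [max_eq_left h]; nlinarith
    exact_mod_cast this

/-- Pottier's bound: a solution in `ℕ` of a homogeneous system which is larger than
`(1 + L) ^ d` splits off a strictly smaller nonzero solution. -/
theorem exists_smaller_solution {ι κ : Type*} [Fintype ι] [Fintype κ] (B : κ → ι → ℤ) (L : ℕ)
    (hB : ∀ i, ∑ j, |B i j| ≤ (L : ℤ)) (m : ι → ℕ) (hm : ∀ i, ∑ j, B i j * (m j : ℤ) = 0)
    (hlarge : (1 + L) ^ Fintype.card κ < ∑ j, m j) :
    ∃ y ≤ m, (∀ i, ∑ j, B i j * (y j : ℤ) = 0) ∧ 0 < ∑ j, y j ∧ ∑ j, y j < ∑ j, m j := by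
  classical
  obtain ⟨f, hmono, hnear, hsum⟩ := exists_path_nearSegment m
  let T : Finset (κ → ℤ) := Fintype.piFinset fun i =>
    Finset.Icc (∑ j, min (B i j) 0) (∑ j, max (B i j) 0)
  have hT : T.card ≤ (1 + L) ^ Fintype.card κ := by
    rw [Fintype.card_piFinset, ← Finset.card_univ]
    refine Finset.prod_le_pow_card _ _ _ fun i _ => ?_
    rw [Int.card_Icc]
    have hdiff : ∑ j, max (B i j) 0 - ∑ j, min (B i j) 0 = ∑ j, |B i j| := by
      rw [← Finset.sum_sub_distrib]
      exact Finset.sum_congr rfl fun j _ => by rw [max_sub_min_eq_abs, zero_sub, abs_neg]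
    have := hB i
    omega
  have hmaps : ∀ n ∈ Finset.range (∑ j, m j), (fun i => ∑ j, B i j * (f n j : ℤ)) ∈ T :=
    fun n _ => Fintype.mem_piFinset.2 fun i => (hnear n).sum_mem_Icc (hm i)
  obtain ⟨p, hp, q, hq, hpq, heq⟩ := Finset.exists_ne_map_eq_of_card_lt_of_maps_to
    (by rw [Finset.card_range]; exact hT.trans_lt hlarge) hmaps
  wlog hlt : p < q generalizing p q
  · exact this q hq p hp hpq.symm heq.symm (by omega)
  rw [Finset.mem_range] at hp hq
  have hle : f p ≤ f q := hmono hlt.le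
  have hdiff : ∑ j, (f q - f p) j = q - p := by
    simp_rw [Pi.sub_apply]
    rw [Finset.sum_tsub_distrib _ fun j _ => hle j, hsum q hq.le, hsum p hp.le]
  refine ⟨f q - f p, fun j => (Nat.sub_le _ _).trans ((hnear q).1 j), fun i => ?_, ?_, ?_⟩
  · have := congrFun heq i
    simp_rw [Pi.sub_apply, Nat.cast_sub (hle _), mul_sub, Finset.sum_sub_distrib]
    omega
  · omega
  · omega

/-- A homogeneous system with a solution in `ℕ` whose coordinate `z` is `1` has a small one. -/
theorem exists_small_solution {ι κ : Type*} [Fintype ι] [Fintype κ] (B : κ → ι → ℤ) (L : ℕ)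
    (hB : ∀ i, ∑ j, |B i j| ≤ (L : ℤ)) (z : ι)
    (h : ∃ m : ι → ℕ, (∀ i, ∑ j, B i j * (m j : ℤ) = 0) ∧ m z = 1) :
    ∃ m : ι → ℕ, (∀ i, ∑ j, B i j * (m j : ℤ) = 0) ∧ m z = 1 ∧
      ∑ j, m j ≤ (1 + L) ^ Fintype.card κ := by
  obtain ⟨m, ⟨hm, hz⟩, hmin⟩ := (measure fun m : ι → ℕ => ∑ j, m j).wf.has_min
    {m | (∀ i, ∑ j, B i j * (m j : ℤ) = 0) ∧ m z = 1} h
  refine ⟨m, hm, hz, not_lt.1 fun hlarge => ?_⟩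
  obtain ⟨y, hle, hy, hpos, hlt⟩ := exists_smaller_solution B L hB m hm hlarge
  have hyz : y z ≤ 1 := (hle z).trans_eq hz
  rcases (by omega : y z = 1 ∨ y z = 0) with h1 | h0
  · exact hmin y ⟨hy, h1⟩ hlt
  · refine hmin (m - y) ⟨fun i => ?_, by simp [hz, h0]⟩ ?_
    · simp_rw [Pi.sub_apply, Nat.cast_sub (hle _), mul_sub, Finset.sum_sub_distrib, hm, hy,
        sub_zero]
    · change ∑ j, (m - y) j < ∑ j, m j
      simp_rw [Pi.sub_apply]
      rw [Finset.sum_tsub_distrib _ fun j _ => hle j]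
      omega


/-- small solutions of linear inequality systems.  There is a
constant `c` such that for all `d, k, M` with `M ≥ 1`, every system `A·x ≥ b`
of `d` linear inequalities in `k` variables, with integer coefficients of
absolute value at most `M`, that has a solution over ℕ, has a solution over ℕ
all of whose entries are at most `(c·k·M)^d`. -/
theorem small_solutions_of_linear_inequalities :
    ∃ c : ℕ, ∀ (d k M : ℕ), 1 ≤ M →
      ∀ (A : Matrix (Fin d) (Fin k) ℤ) (b : Fin d → ℤ),
        (∀ i j, |A i j| ≤ (M : ℤ)) →
        (∀ i, |b i| ≤ (M : ℤ)) →
        (∃ x : Fin k → ℕ, ∀ i, b i ≤ ∑ j, A i j * (x j : ℤ)) →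
        ∃ x : Fin k → ℕ, (∀ i, b i ≤ ∑ j, A i j * (x j : ℤ)) ∧
          ∀ j, x j ≤ (c * k * M) ^ d := by
  refine ⟨4, fun d k M hM A b hA hb ⟨x, hx⟩ => ?_⟩
  rcases Nat.eq_zero_or_pos k with rfl | hk
  · exact ⟨x, hx, fun j => j.elim0⟩
  let B : Fin d → Fin k ⊕ Fin d ⊕ Unit → ℤ := fun i =>
    Sum.elim (A i) (Sum.elim (fun i' => if i = i' then -1 else 0) fun _ => -b i)
  have hBsum : ∀ (m : Fin k ⊕ Fin d ⊕ Unit → ℕ) (i : Fin d), ∑ j, B i j * (m j : ℤ) =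
      ∑ j, A i j * (m (.inl j) : ℤ) - m (.inr (.inl i)) - b i * m (.inr (.inr ())) := by
    intro m i
    simp [B, Fintype.sum_sum_type]
    ring
  have hB : ∀ i, ∑ j, |B i j| ≤ ((k * M + 1 + M : ℕ) : ℤ) := by
    intro i
    have hrow : ∑ j, |A i j| ≤ k * M := by
      simpa using Finset.sum_le_card_nsmul Finset.univ _ (M : ℤ) fun j _ => hA i j
    have hslack : ∑ i' : Fin d, |(if i = i' then -1 else 0 : ℤ)| = 1 := by
      simp [apply_ite abs]
    have := hb i
    simp only [B, Fintype.sum_sum_type, Sum.elim_inl, Sum.elim_inr, hslack, abs_neg,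
      Finset.univ_unique, Finset.sum_singleton]
    push_cast
    linarith
  obtain ⟨m, hm, hz, hsmall⟩ := exists_small_solution B _ hB (.inr (.inr ()))
    ⟨Sum.elim x (Sum.elim (fun i => (∑ j, A i j * (x j : ℤ) - b i).toNat) fun _ => 1),
      fun i => by
        rw [hBsum]
        simp [hx i], rfl⟩
  refine ⟨fun j => m (.inl j), fun i => ?_, fun j => ?_⟩
  · have := hm i
    rw [hBsum, hz] at this
    push_cast at this
    linarith [Nat.cast_nonneg (α := ℤ) (m (.inr (.inl i)))]
  · refine (Finset.single_le_sum (fun _ _ => Nat.zero_le _) (Finset.mem_univ (Sum.inl j))).trans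
      (hsmall.trans ?_)
    rw [Fintype.card_fin]
    refine Nat.pow_le_pow_left ?_ d
    nlinarith [Nat.mul_le_mul hk hM, Nat.mul_le_mul_right M hk]
end

section
/- Let V be a 2-VASS with n control states and norm M, let K ∈ ℕ, and let ρ be a run of V such that for some fixed coordinate j ∈ {1,2}, the j-th coordinate of the vector of every configuration in ρ is smaller than K, and such that ‖trg(ρ)‖ > ‖src(ρ)‖ + K·n·M. Then ρ contains, as an infix, a cycle whose effect is vertical or horizontal. -/
/-- An integer sequence with increments at most `M` that climbs by more than `S.card * M`, coloured
by elements of `S`, takes the same colour at two times where its value has strictly increased. -/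
lemma exists_lt_map_eq_of_step_le {α : Type*} (c : ℕ → α) (S : Finset α) (y : ℕ → ℤ) (L M : ℕ)
    (hc : ∀ i ≤ L, c i ∈ S) (hstep : ∀ i < L, y (i + 1) ≤ y i + M)
    (hfar : y 0 + S.card * M < y L) :
    ∃ l r, l < r ∧ r ≤ L ∧ c l = c r ∧ y l < y r := by
  classical
  -- `t k` is the first time at which the sequence exceeds `y 0 + k * M`.
  have hfirst : ∀ k : ℕ, ∃ i, k ≤ S.card → i ≤ L ∧ y 0 + k * M < y i ∧
      y i ≤ y 0 + (k + 1) * M ∧ ∀ i' < i, y i' ≤ y 0 + k * M := by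
    intro k
    by_cases hk : k ≤ S.card
    · have hex : ∃ i, y 0 + k * M < y i := by
        refine ⟨L, lt_of_le_of_lt ?_ hfar⟩
        gcongr
      have hspec := Nat.find_spec hex
      have hmin : ∀ i' < Nat.find hex, y i' ≤ y 0 + k * M :=
        fun i' hi' => not_lt.mp (Nat.find_min hex hi')
      have hle : Nat.find hex ≤ L := by
        refine Nat.find_min' hex (lt_of_le_of_lt ?_ hfar)
        gcongr
      refine ⟨Nat.find hex, fun _ => ⟨hle, hspec, ?_, hmin⟩⟩
      generalize Nat.find hex = m at *
      cases m with
      | zero =>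
        have : (0 : ℤ) ≤ k * M := by positivity
        linarith
      | succ p =>
        have h₁ := hmin p (Nat.lt_succ_self p)
        have h₂ := hstep p hle
        linarith
    · exact ⟨0, fun h => absurd h hk⟩
  choose t ht using hfirst
  obtain ⟨a, ha, b, hb, hne, heq⟩ := Finset.exists_ne_map_eq_of_card_lt_of_maps_to
    (s := Finset.range (S.card + 1)) (t := S) (f := fun k => c (t k)) (by simp)
    (fun k hk => hc _ (ht k (Nat.lt_succ_iff.mp (Finset.mem_range.mp hk))).1)
  rw [Finset.mem_range, Nat.lt_succ_iff] at ha hb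
  have key : ∀ a b, a < b → a ≤ S.card → b ≤ S.card → c (t a) = c (t b) →
      ∃ l r, l < r ∧ r ≤ L ∧ c l = c r ∧ y l < y r := by
    intro a b hab ha hb heq
    obtain ⟨-, -, ha₂, ha₃⟩ := ht a ha
    obtain ⟨hbL, hb₁, -, -⟩ := ht b hb
    have hmul : ((a : ℤ) + 1) * M ≤ b * M := by
      gcongr
      exact_mod_cast hab
    have hy : y (t a) < y (t b) := by linarith
    refine ⟨t a, t b, ?_, hbL, heq, hy⟩
    by_contra hlt
    rcases (not_lt.mp hlt).lt_or_eq with h | h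
    · have h₁ := ha₃ _ h
      have : (0 : ℤ) ≤ M := by positivity
      linarith
    · rw [h] at hy
      exact lt_irrefl _ hy
  rcases hne.lt_or_gt with h | h
  · exact key a b h ha hb heq
  · exact key b a h hb ha heq.symm

lemma effect_append {n : ℕ} (π π' : List (Transition n)) :
    effect (π ++ π') = effect π + effect π' := by
  simp [effect]

/-- The effect of an infix is the difference of the counter values at its ends. -/
lemma vecAt_add_effect_infix {n : ℕ} (π : List (Transition n)) (u : Vec2) {l r : ℕ}
    (hlr : l ≤ r) :
    vecAt π u l + effect ((π.drop l).take (r - l)) = vecAt π u r := by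
  obtain ⟨d, rfl⟩ := Nat.exists_eq_add_of_le hlr
  rw [vecAt, vecAt, List.take_add, effect_append, add_assoc, Nat.add_sub_cancel_left]

lemma vnorm_le_vassNorm {n : ℕ} {V : VASS n} {t : Transition n} (ht : t ∈ V) :
    vnorm t.2.1 ≤ vassNorm V :=
  Finset.le_sup (f := fun t : Transition n => vnorm t.2.1) ht

lemma abs_proj_le_vnorm (j : Fin 2) (v : Vec2) : |proj j v| ≤ vnorm v := by
  unfold proj vnorm
  split <;> rw [Int.abs_eq_natAbs] <;> simp

lemma exists_abs_proj_eq_vnorm (v : Vec2) : ∃ j, |proj j v| = vnorm v := by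
  rcases le_total v.1.natAbs v.2.natAbs with h | h
  · refine ⟨1, ?_⟩
    simp [proj, vnorm, h]
  · refine ⟨0, ?_⟩
    simp [proj, vnorm, h]

lemma proj_add (j : Fin 2) (v w : Vec2) : proj j (v + w) = proj j v + proj j w := by
  unfold proj
  split <;> simp

lemma proj_nonneg {v : Vec2} (hv : 0 ≤ v) (j : Fin 2) : 0 ≤ proj j v := by
  unfold proj
  split
  · exact hv.1
  · exact hv.2

/-- A single transition raises each counter by at most the norm of the system. -/
lemma proj_vecAt_succ_le {n : ℕ} {V : VASS n} {π : List (Transition n)} (hπ : ∀ t ∈ π, t ∈ V)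
    (u : Vec2) (j : Fin 2) {i : ℕ} (hi : i < π.length) :
    proj j (vecAt π u (i + 1)) ≤ proj j (vecAt π u i) + vassNorm V := by
  have heff : vecAt π u (i + 1) = vecAt π u i + π[i].2.1 := by
    rw [vecAt, vecAt, List.take_add_one, List.getElem?_eq_getElem hi, effect_append, ← add_assoc]
    simp [effect]
  have h₁ := abs_proj_le_vnorm j π[i].2.1
  have h₂ := vnorm_le_vassNorm (hπ _ (List.getElem_mem hi))
  have h₃ := le_abs_self (proj j π[i].2.1)
  rw [heff, proj_add]
  omega

/-- A vector that vanishes in one coordinate and is positive in the other is vertical or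
horizontal. -/
lemma vert_or_horiz_of_proj {v : Vec2} {j k : Fin 2} (hj : proj j v = 0) (hk : 0 < proj k v) :
    Vert v ∨ Horiz v := by
  unfold Vert Horiz
  fin_cases j <;> fin_cases k <;> simp [proj] at hj hk <;> omega

/-- If along a run `ρ` of a 2-VASS `V` (with `n` states and
norm `M`) some fixed coordinate `j` stays smaller than `K` in every
configuration, and the norm of the target exceeds the norm of the source by
more than `K·n·M`, then `ρ` contains, as an infix, a cycle whose effect is
vertical or horizontal. -/
theorem one_coordinate_bounded_infix_cycle
    (n : ℕ) (V : VASS n) (π : List (Transition n)) (q : Fin n) (u : Vec2)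
    (K : ℕ) (j : Fin 2)
    (hrun : IsRun V π q u)
    (hbounded : ∀ i ≤ π.length, proj j (vecAt π u i) < (K : ℤ))
    (hfar : vnorm u + K * n * vassNorm V < vnorm (vecAt π u π.length)) :
    ∃ l r : ℕ, l < r ∧ r ≤ π.length ∧
      stateAt π q l = stateAt π q r ∧
      (Vert (effect (List.take (r - l) (List.drop l π))) ∨
       Horiz (effect (List.take (r - l) (List.drop l π)))) := by
  obtain ⟨k, hk⟩ := exists_abs_proj_eq_vnorm (vecAt π u π.length)
  rw [abs_of_nonneg (proj_nonneg (hrun.2.2 _ le_rfl) k)] at hk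
  have hsrc : proj k u ≤ vnorm u := (le_abs_self _).trans (abs_proj_le_vnorm k u)
  obtain ⟨l, r, hlr, hr, heq, hlt⟩ := exists_lt_map_eq_of_step_le
    (fun i => (stateAt π q i, proj j (vecAt π u i))) (Finset.univ ×ˢ Finset.Ico (0 : ℤ) K)
    (fun i => proj k (vecAt π u i)) π.length (vassNorm V)
    (fun i hi => by simpa using ⟨proj_nonneg (hrun.2.2 i hi) j, hbounded i hi⟩)
    (fun i hi => proj_vecAt_succ_le hrun.1.1 u k hi)
    (by
      have hzero : vecAt π u 0 = u := by simp [vecAt, effect]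
      have hcard : (Finset.univ ×ˢ Finset.Ico (0 : ℤ) K : Finset (Fin n × ℤ)).card = K * n := by
        simp [mul_comm]
      simp only [hzero, hcard, hk]
      have : ((vnorm u + K * n * vassNorm V : ℕ) : ℤ) < vnorm (vecAt π u π.length) :=
        Int.ofNat_lt.mpr hfar
      push_cast at this ⊢
      linarith)
  obtain ⟨hstate, hproj⟩ := Prod.mk.inj heq
  refine ⟨l, r, hlr, hr, hstate, vert_or_horiz_of_proj (j := j) (k := k) ?_ ?_⟩
  · rw [← vecAt_add_effect_infix π u hlr.le, proj_add] at hproj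
    linarith
  · simp only [← vecAt_add_effect_infix π u hlr.le, proj_add] at hlt
    linarith
end
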